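/- The Taylor coefficients PA_n of the area generating function of 3-sided prudent polygons satisfy, as n → ∞, PA_n = [κ₀ + κ(log₂ n)] · 2ⁿ · n^g + O(2ⁿ · n^{g-1} · log n), where the critical exponent is g = log₂ 3, the principal constant is κ₀ = ( π / (9 log 2 · sin(πg) · Γ(g+1)) ) · ∏_{j=0}^∞ (1 - (1/3)·2^{-j})(1 - (3/2)·2^{-j}) / (1 - (1/2)·2^{-j})², and κ(u) is a smooth periodic function of u with period 1 and mean value zero given by the absolutely convergent Fourier series κ(u) = ∑_{k∈ℤ, k≠0} κ_k e^{2πiku} with κ_k = κ₀ · ( sin(πg) / sin(πg + 2ikπ²/log 2) ) · ( Γ(1+g) / Γ(1+g + 2ikπ/log 2) ). -/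

import Mathlib

open Complex Filter Asymptotics Topology

noncomputable section

/-- finite q-Pochhammer symbol `(x;q)_n` -/
def qPF (x q : ℂ) (n : ℕ) : ℂ := ∏ i ∈ Finset.range n, (1 - x * q ^ i)

/-- infinite q-Pochhammer symbol `(x;q)_∞` -/
def qPI (x q : ℂ) : ℂ := ∏' i : ℕ, (1 - x * q ^ i)

def uF (q : ℂ) : ℂ := q / (1 - q)
def vF (q : ℂ) : ℂ := (1 - q + q ^ 2) / (1 - q)
def aF (q : ℂ) : ℂ := q ^ 2 / (1 - q + q ^ 2)
def AF (q : ℂ) : ℂ := 2 * q * (1 - q) ^ 2 / (1 - 2 * q) ^ 2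
def CF (q : ℂ) : ℂ := 2 * q * (3 - 10 * q + 9 * q ^ 2 - q ^ 3) / ((1 - q) * (1 - 2 * q) ^ 2)
def DF (q : ℂ) : ℂ := CF q - (q ^ 2 / (1 - q) ^ 2) * AF q * qPI (vF q) q / qPI (aF q * vF q) q

/-- the `m`-th term (for `m ≥ 1`) of the explicit series for `PA(q)` -/
def PAterm (q : ℂ) (m : ℕ) : ℂ :=
  (-1) ^ m * q ^ (2 * m) / ((1 - 2 * q) ^ m * (1 - q - q ^ (m + 1))) *
    ∏ k ∈ Finset.Icc 1 (m - 1),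
      ((1 - q - q ^ k + q ^ (k + 1) - q ^ (k + 2)) / (1 - q - q ^ (k + 1)))

/-- the explicit convergent series defining `PA(q)` for small `q` -/
def PAseries (q : ℂ) : ℂ :=
  (-2 * q ^ 3 * (1 - q) ^ 2 / (1 - 2 * q) ^ 2) * (∑' m : ℕ, PAterm q (m + 1))
    + 2 * q * (3 - 10 * q + 9 * q ^ 2 - q ^ 3) / ((1 - 2 * q) ^ 2 * (1 - q))

/-- the critical exponent `g = log₂ 3` -/
def gExp : ℝ := Real.logb 2 3

/-- the principal constant `κ₀` -/
def kappa0 : ℝ :=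
  Real.pi / (9 * Real.log 2 * Real.sin (Real.pi * gExp) * Real.Gamma (gExp + 1)) *
    ∏' j : ℕ, ((1 - (1 / 3) * (2 : ℝ) ^ (-(j : ℤ))) * (1 - (3 / 2) * (2 : ℝ) ^ (-(j : ℤ))) /
      (1 - (1 / 2) * (2 : ℝ) ^ (-(j : ℤ))) ^ 2)

/-- the Fourier coefficients `κ_k` -/
def kappaCoef (k : ℤ) : ℂ :=
  (kappa0 : ℂ) *
    ((Real.sin (Real.pi * gExp) : ℂ) /
      Complex.sin ((Real.pi : ℂ) * (gExp : ℂ) +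
        2 * Complex.I * (k : ℂ) * (Real.pi : ℂ) ^ 2 / (Real.log 2 : ℂ))) *
    (Complex.Gamma (1 + (gExp : ℂ)) /
      Complex.Gamma (1 + (gExp : ℂ) + 2 * Complex.I * (k : ℂ) * (Real.pi : ℂ) / (Real.log 2 : ℂ)))

/-- the oscillating function `κ(u) = ∑_{k≠0} κ_k e^{2πiku}` -/
def kappaFun (u : ℝ) : ℂ :=
  ∑' k : ℤ, if k = 0 then 0 else
    kappaCoef k * Complex.exp (2 * (Real.pi : ℂ) * Complex.I * (k : ℂ) * (u : ℂ))



def chiK (k : ℤ) : ℂ := 2 * Complex.I * (k : ℂ) * (Real.pi : ℂ) / (Real.log 2 : ℂ)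

/-- the infinite product in `kappa0` -/
def PiProd : ℝ := ∏' j : ℕ, ((1 - (1 / 3) * (2 : ℝ) ^ (-(j : ℤ))) * (1 - (3 / 2) * (2 : ℝ) ^ (-(j : ℤ))) /
      (1 - (1 / 2) * (2 : ℝ) ^ (-(j : ℤ))) ^ 2)

lemma log2_pos : 0 < Real.log 2 := Real.log_pos (by norm_num)

lemma two_rpow_g : (2 : ℝ) ^ gExp = 3 := by
  unfold gExp; exact Real.rpow_logb (by norm_num) (by norm_num) (by norm_num)

lemma g_gt : 1 < gExp := by
  unfold gExp; rw [Real.lt_logb_iff_rpow_lt (by norm_num) (by norm_num)]; norm_num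

lemma g_gt' : 3 / 2 < gExp := by
  have h : Real.logb 2 8 < Real.logb 2 9 := Real.logb_lt_logb (by norm_num) (by norm_num) (by norm_num)
  have h8 : Real.logb 2 8 = 3 := by
    rw [show (8 : ℝ) = 2 ^ (3 : ℝ) by norm_num]; exact Real.logb_rpow (by norm_num) (by norm_num)
  have h9 : Real.logb 2 9 = 2 * Real.logb 2 3 := by
    rw [show (9 : ℝ) = 3 ^ 2 by norm_num, Real.logb_pow]; norm_num
  unfold gExp; linarith

lemma g_lt : gExp < 2 := by
  unfold gExp; rw [Real.logb_lt_iff_lt_rpow (by norm_num) (by norm_num)]; norm_num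

lemma sin_g_ne : Real.sin (Real.pi * gExp) ≠ 0 := by
  have h1 := g_gt
  have h2 := g_lt
  have hp := Real.pi_pos
  have : 0 < Real.sin (Real.pi * gExp - Real.pi) := by
    apply Real.sin_pos_of_pos_of_lt_pi <;> nlinarith
  rw [Real.sin_sub_pi] at this
  intro h; rw [h] at this; simp at this

lemma chiK_re (k : ℤ) : (chiK k).re = 0 := by
  have : chiK k = ((2 * k * Real.pi / Real.log 2 : ℝ) : ℂ) * I := by
    unfold chiK; push_cast; ring
  rw [this, Complex.re_ofReal_mul]; simp

lemma chiK_im (k : ℤ) : (chiK k).im = 2 * k * Real.pi / Real.log 2 := by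
  have : chiK k = ((2 * k * Real.pi / Real.log 2 : ℝ) : ℂ) * I := by
    unfold chiK; push_cast; ring
  rw [this, Complex.im_ofReal_mul]; simp

lemma kappaCoef_eq (k : ℤ) :
    kappaCoef k = -((PiProd / (9 * Real.log 2) : ℝ) : ℂ) * Complex.Gamma (-(gExp : ℂ) - chiK k) := by
  have hL := log2_pos
  have hs : (Real.sin (Real.pi * gExp) : ℂ) ≠ 0 := by exact_mod_cast sin_g_ne
  have hG1 : Complex.Gamma (1 + (gExp : ℂ)) ≠ 0 := by
    apply Complex.Gamma_ne_zero_of_re_pos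
    have := g_gt; simp; linarith
  have hG2 : Complex.Gamma (1 + (gExp : ℂ) + chiK k) ≠ 0 := by
    apply Complex.Gamma_ne_zero_of_re_pos
    have := g_gt; simp [chiK_re]; linarith
  have hrefl := Complex.Gamma_mul_Gamma_one_sub (-(gExp : ℂ) - chiK k)
  have e1 : (1 : ℂ) - (-(gExp : ℂ) - chiK k) = 1 + gExp + chiK k := by ring
  have e2 : (Real.pi : ℂ) * (-(gExp : ℂ) - chiK k) = -((Real.pi : ℂ) * (gExp : ℂ) +
        2 * Complex.I * (k : ℂ) * (Real.pi : ℂ) ^ 2 / (Real.log 2 : ℂ)) := by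
    unfold chiK; ring
  rw [e1, e2, Complex.sin_neg] at hrefl
  have e3 : Complex.Gamma (-(gExp : ℂ) - chiK k) = -(Real.pi / Complex.sin ((Real.pi : ℂ) * (gExp : ℂ) +
        2 * Complex.I * (k : ℂ) * (Real.pi : ℂ) ^ 2 / (Real.log 2 : ℂ))) / Complex.Gamma (1 + gExp + chiK k) := by
    rw [eq_div_iff hG2, hrefl, div_neg]
  rw [e3]
  have hk0 : (kappa0 : ℂ) = Real.pi / (9 * Real.log 2 * Real.sin (Real.pi * gExp) * Complex.Gamma (1 + gExp)) * PiProd := by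
    unfold kappa0
    rw [Complex.ofReal_mul]
    congr 1
    push_cast
    rw [← Complex.Gamma_ofReal]; push_cast; rw [add_comm]
  unfold kappaCoef
  rw [hk0]
  change _ * _ * (_ / Complex.Gamma (1 + gExp + chiK k)) = _
  have hLc : (Real.log 2 : ℂ) ≠ 0 := by exact_mod_cast hL.ne'
  generalize Complex.sin ((Real.pi : ℂ) * (gExp : ℂ) +
        2 * Complex.I * (k : ℂ) * (Real.pi : ℂ) ^ 2 / (Real.log 2 : ℂ)) = S
  have hLc' : ((9 * Real.log 2 : ℝ) : ℂ) = 9 * (Real.log 2 : ℂ) := by rw [Complex.ofReal_mul]; norm_num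
  rw [Complex.ofReal_div, hLc']
  generalize (Real.log 2 : ℂ) = L at *
  generalize (Real.sin (Real.pi * gExp) : ℂ) = S' at *
  field_simp

lemma kappaCoef_zero : kappaCoef 0 = kappa0 := by
  have hs : (Real.sin (Real.pi * gExp) : ℂ) ≠ 0 := by exact_mod_cast sin_g_ne
  have hG1 : Complex.Gamma (1 + (gExp : ℂ)) ≠ 0 := by
    apply Complex.Gamma_ne_zero_of_re_pos
    have := g_gt; simp; linarith
  unfold kappaCoef
  push_cast at hs
  simp [hG1, hs]

/-- superpolynomial decay of Gamma on vertical lines -/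
lemma Gamma_decay (σ : ℝ) (m : ℕ) (hm : 0 < σ + m) (s : ℂ) (hs : s.re = σ) (him : s.im ≠ 0) :
    ‖Complex.Gamma s‖ ≤ Real.Gamma (σ + m) / |s.im| ^ m := by
  induction m generalizing σ s with
  | zero =>
    simp at hm ⊢
    rw [← hs] at hm ⊢
    rw [Complex.Gamma_eq_integral hm, Real.Gamma_eq_integral hm]
    unfold Complex.GammaIntegral
    refine (MeasureTheory.norm_integral_le_integral_norm _).trans (le_of_eq ?_)
    apply MeasureTheory.setIntegral_congr_fun measurableSet_Ioi
    intro x hx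
    simp only [norm_mul]
    rw [Complex.norm_cpow_eq_rpow_re_of_pos hx]
    simp [Complex.norm_exp]
  | succ m ih =>
    have hs0 : s ≠ 0 := by rintro rfl; simp at him
    have h1 := Complex.Gamma_add_one s hs0
    have h2 := ih (σ + 1) (by push_cast at hm; linarith) (s + 1) (by simp [hs]) (by simpa using him)
    rw [h1, norm_mul] at h2
    have h3 : |s.im| ≤ ‖s‖ := Complex.abs_im_le_norm s
    have h4 : 0 < |s.im| := abs_pos.mpr him
    simp only [add_im, one_im, add_zero] at h2
    rw [le_div_iff₀ (by positivity)] at h2 ⊢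
    have e : σ + ((m + 1 : ℕ) : ℝ) = σ + 1 + m := by push_cast; ring
    rw [e]
    calc ‖Complex.Gamma s‖ * |s.im| ^ (m + 1) = |s.im| * ‖Complex.Gamma s‖ * |s.im| ^ m := by ring
      _ ≤ ‖s‖ * ‖Complex.Gamma s‖ * |s.im| ^ m := by gcongr
      _ ≤ _ := h2

lemma Gamma_chi_bound (m : ℕ) (hm : 2 ≤ m) :
    ∃ C : ℝ, 0 ≤ C ∧ ∀ k : ℤ, k ≠ 0 → ‖Complex.Gamma (-(gExp : ℂ) - chiK k)‖ ≤ C / |(k : ℝ)| ^ m := by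
  have hm' : 0 < -gExp + m := by
    have := g_lt; have : (2 : ℝ) ≤ m := by exact_mod_cast hm
    linarith
  refine ⟨Real.Gamma (-gExp + m), (Real.Gamma_pos_of_pos hm').le, fun k hk => ?_⟩
  have hL := log2_pos
  have hL1 : Real.log 2 < 1 := by have := Real.log_two_lt_d9; linarith
  have him : (-(gExp : ℂ) - chiK k).im = -(2 * k * Real.pi / Real.log 2) := by
    simp [chiK_im]
  have hkr : (k : ℝ) ≠ 0 := by exact_mod_cast hk
  have hk1 : |(k : ℝ)| ≤ |(-(gExp : ℂ) - chiK k).im| := by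
    rw [him, abs_neg, abs_div, abs_mul, abs_mul, abs_of_pos Real.pi_pos, abs_of_pos hL, le_div_iff₀ hL]
    have := Real.pi_gt_three
    have h0 := abs_nonneg (k : ℝ)
    norm_num
    nlinarith
  have hkp : 0 < |(k : ℝ)| := abs_pos.mpr hkr
  refine (Gamma_decay (-gExp) m hm' _ (by simp [chiK_re]) ?_).trans ?_
  · intro h; rw [h] at hk1; simp at hk1; exact hk hk1
  · have := (Real.Gamma_pos_of_pos hm').le
    gcongr

lemma kappaCoef_bound (m : ℕ) (hm : 2 ≤ m) :
    ∃ C : ℝ, 0 ≤ C ∧ ∀ k : ℤ, k ≠ 0 → ‖kappaCoef k‖ ≤ C / |(k : ℝ)| ^ m := by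
  obtain ⟨C, hC, h⟩ := Gamma_chi_bound m hm
  refine ⟨‖-((PiProd / (9 * Real.log 2) : ℝ) : ℂ)‖ * C, by positivity, fun k hk => ?_⟩
  rw [kappaCoef_eq, norm_mul, mul_div_assoc]
  gcongr
  exact h k hk

lemma summable_int_pow (m : ℕ) (hm : 2 ≤ m) : Summable (fun k : ℤ => 1 / |(k : ℝ)| ^ m) := by
  have := Real.summable_one_div_int_pow (p := m) |>.mpr (by omega)
  have h2 := this.abs
  refine h2.congr fun k => ?_
  rw [abs_div, abs_one, abs_pow]

lemma kappaCoef_summable : Summable (fun k : ℤ => ‖kappaCoef k‖) := by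
  obtain ⟨C, hC, h⟩ := kappaCoef_bound 2 le_rfl
  have hs : Summable (fun k : ℤ => C * (1 / |(k : ℝ)| ^ 2) + (if k = 0 then ‖kappaCoef 0‖ else 0)) := by
    apply Summable.add ((summable_int_pow 2 le_rfl).mul_left C)
    exact summable_of_hasFiniteSupport ((Set.finite_singleton (0:ℤ)).subset (by intro k hk; simp at hk; simp [hk.1]))
  refine Summable.of_nonneg_of_le (fun k => norm_nonneg _) (fun k => ?_) hs
  by_cases hk : k = 0
  · subst hk; simp
  · have := h k hk
    simp only [hk, if_false, add_zero]; rwa [mul_one_div]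

lemma kappaFun_periodic (u : ℝ) : kappaFun (u + 1) = kappaFun u := by
  unfold kappaFun
  congr 1; ext k
  split_ifs
  · rfl
  · congr 1
    rw [Complex.exp_eq_exp_iff_exists_int]
    exact ⟨k, by push_cast; ring⟩

def kTerm (k : ℤ) (u : ℝ) : ℂ := if k = 0 then 0 else
    kappaCoef k * Complex.exp (2 * (Real.pi : ℂ) * Complex.I * (k : ℂ) * (u : ℂ))

lemma kTerm_iter (k : ℤ) (m : ℕ) : iteratedDeriv m (kTerm k) =
    fun u => (2 * (Real.pi : ℂ) * Complex.I * (k : ℂ)) ^ m * kTerm k u := by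
  induction m with
  | zero => simp
  | succ m ih =>
    rw [iteratedDeriv_succ, ih]
    ext u
    have hd : HasDerivAt (kTerm k) ((2 * (Real.pi : ℂ) * Complex.I * (k : ℂ)) * kTerm k u) u := by
      unfold kTerm
      by_cases hk : k = 0
      · simp [hk]; exact hasDerivAt_const _ _
      · simp only [hk, if_false]
        have h1 : HasDerivAt (fun u : ℝ => (2 * (Real.pi : ℂ) * Complex.I * (k : ℂ)) * (u : ℂ))
            ((2 * (Real.pi : ℂ) * Complex.I * (k : ℂ)) * 1) u :=
          (Complex.ofRealCLM.hasDerivAt (x := u)).const_mul _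
        refine ((h1.cexp).const_mul (kappaCoef k)).congr_deriv ?_
        ring
    rw [(hd.const_mul _).deriv]; ring

lemma kTerm_contDiff (k : ℤ) {n : WithTop ℕ∞} : ContDiff ℝ n (kTerm k) := by
  unfold kTerm
  by_cases hk : k = 0
  · simp [hk]; exact contDiff_const
  · simp only [hk, if_false]
    have h : ContDiff ℝ n (fun u : ℝ => (u : ℂ)) := Complex.ofRealCLM.contDiff
    exact contDiff_const.mul (ContDiff.cexp (contDiff_const.mul h))

lemma kTerm_norm (k : ℤ) (u : ℝ) : ‖kTerm k u‖ ≤ ‖kappaCoef k‖ := by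
  unfold kTerm
  split_ifs
  · simp
  · rw [norm_mul, Complex.norm_exp]; simp

lemma kappaFun_contDiff : ContDiff ℝ (⊤ : ℕ∞) kappaFun := by
  have : kappaFun = fun u => ∑' k : ℤ, kTerm k u := rfl
  rw [this]
  choose! C hC h using kappaCoef_bound
  refine contDiff_tsum (v := fun m (k : ℤ) => (2 * Real.pi) ^ m * C (m + 2) * (1 / |(k : ℝ)| ^ 2)) 
    (fun k => kTerm_contDiff k) (fun m _ => (summable_int_pow 2 le_rfl).mul_left _) ?_
  intro m k u _
  rw [norm_iteratedFDeriv_eq_norm_iteratedDeriv, kTerm_iter]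
  by_cases hk : k = 0
  · simp [kTerm, hk]
  · have h1 := h (m + 2) (by omega) k hk
    have hkp : 0 < |(k : ℝ)| := abs_pos.mpr (by exact_mod_cast hk)
    simp only [norm_mul, norm_pow]
    have h2 : ‖(2:ℂ)‖ * ‖(Real.pi : ℂ)‖ * ‖I‖ * ‖(k : ℂ)‖ = 2 * Real.pi * |(k : ℝ)| := by
      simp [abs_of_pos Real.pi_pos]
    rw [h2]
    calc (2 * Real.pi * |(k : ℝ)|) ^ m * ‖kTerm k u‖ ≤ (2 * Real.pi * |(k : ℝ)|) ^ m * (C (m + 2) / |(k : ℝ)| ^ (m + 2)) := by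
          gcongr; exact (kTerm_norm k u).trans h1
      _ = _ := by rw [mul_pow, pow_add]; field_simp

lemma kTerm_summable (u : ℝ) : Summable (fun k => kTerm k u) :=
  Summable.of_norm_bounded kappaCoef_summable (fun k => kTerm_norm k u)

lemma kappaFun_integral : (∫ u in (0 : ℝ)..1, kappaFun u) = 0 := by
  have : kappaFun = fun u => ∑' k : ℤ, kTerm k u := rfl
  rw [this]
  have h := intervalIntegral.hasSum_integral_of_dominated_convergence (a := 0) (b := 1)
    (μ := MeasureTheory.volume)
    (F := kTerm) (f := fun u => ∑' k : ℤ, kTerm k u) (fun k _ => ‖kappaCoef k‖)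
    (fun k => (kTerm_contDiff (n := 0) k).continuous.aestronglyMeasurable)
    (fun k => Eventually.of_forall fun u _ => kTerm_norm k u)
    (Eventually.of_forall fun u _ => kappaCoef_summable)
    (by simp)
    (Eventually.of_forall fun u _ => (kTerm_summable u).hasSum)
  rw [← h.tsum_eq]
  convert tsum_zero with k
  unfold kTerm
  by_cases hk : k = 0
  · simp [hk]
  · simp only [hk, if_false]
    rw [intervalIntegral.integral_const_mul, integral_exp_mul_complex]
    · have : Complex.exp (2 * (Real.pi : ℂ) * Complex.I * (k : ℂ) * ((1:ℝ) : ℂ)) = 1 := by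
        rw [Complex.exp_eq_one_iff]; exact ⟨k, by push_cast; ring⟩
      rw [this]; simp
    · simp [Real.pi_ne_zero, hk]


def psi (t : ℝ) : ℝ := Real.exp (-t) - 1 + t

lemma psi_nonneg (t : ℝ) : 0 ≤ psi t := by
  unfold psi; have := Real.add_one_le_exp (-t); linarith

lemma psi_le (t : ℝ) (ht : 0 ≤ t) : psi t ≤ t := by
  unfold psi; have : Real.exp (-t) ≤ 1 := Real.exp_le_one_iff.mpr (by linarith)
  linarith

lemma exp_neg_le_quad (t : ℝ) (ht : 0 ≤ t) : Real.exp (-t) ≤ 1 - t + t ^ 2 := by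
  have h := Real.add_one_le_exp t
  rw [Real.exp_neg]
  have : (Real.exp t)⁻¹ ≤ (t + 1)⁻¹ := by gcongr
  refine this.trans ?_
  rw [inv_le_iff_one_le_mul₀ (by linarith)]
  nlinarith [pow_nonneg ht 3]

lemma psi_le_sq (t : ℝ) (ht : 0 ≤ t) : psi t ≤ t ^ 2 := by
  unfold psi; have := exp_neg_le_quad t ht; linarith

lemma psi_cont : Continuous psi := by unfold psi; fun_prop

open MeasureTheory Set in
lemma mellin_ibp (f f' : ℝ → ℂ) (p : ℝ) (s : ℂ) (hf : ∀ t ∈ Ioi (0:ℝ), HasDerivAt f (f' t) t)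
    (hf'c : Continuous f')
    (h1 : ∀ t ∈ Ioi (0:ℝ), ‖f t‖ ≤ t ^ (p + 1)) (h2 : ∀ t ∈ Ioi (0:ℝ), ‖f t‖ ≤ t ^ p)
    (h3 : ∀ t ∈ Ioi (0:ℝ), ‖f' t‖ ≤ t ^ p) (h4 : ∀ t ∈ Ioi (0:ℝ), ‖f' t‖ ≤ t ^ (p - 1))
    (hs1 : -(p + 1) < s.re) (hs2 : s.re < -p) (hs0 : s ≠ 0) :
    mellin f s = - (1 / s) * mellin f' (s + 1) := by
  have hfc : ContinuousOn f (Ioi 0) := fun t ht => (hf t ht).continuousAt.continuousWithinAt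
  have hO {h : ℝ → ℂ} {c : ℝ} (hh : ∀ t ∈ Ioi (0:ℝ), ‖h t‖ ≤ t ^ c) (l : Filter ℝ) (hl : ∀ᶠ t in l, t ∈ Ioi (0:ℝ)) :
      h =O[l] fun t => t ^ (-(-c)) := by
    refine IsBigO.of_bound 1 ?_
    filter_upwards [hl] with t ht
    rw [neg_neg, one_mul, Real.norm_of_nonneg (Real.rpow_nonneg (le_of_lt ht) _)]
    exact hh t ht
  have htop : ∀ᶠ t in (atTop : Filter ℝ), t ∈ Ioi (0:ℝ) := eventually_gt_atTop 0
  have hzero : ∀ᶠ t in 𝓝[>] (0:ℝ), t ∈ Ioi (0:ℝ) := self_mem_nhdsWithin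
  have hm1 : MellinConvergent f s := by
    refine mellinConvergent_of_isBigO_rpow (a := -p) (b := -(p+1)) (hfc.locallyIntegrableOn measurableSet_Ioi)
      (hO h2 _ htop) hs2 (hO h1 _ hzero) hs1
  have hm2 : MellinConvergent f' (s + 1) := by
    refine mellinConvergent_of_isBigO_rpow (a := -(p-1)) (b := -p) (hf'c.continuousOn.locallyIntegrableOn measurableSet_Ioi)
      (hO h4 _ htop) (by simp; linarith) (hO h3 _ hzero) (by simp; linarith)
  unfold MellinConvergent at hm1 hm2
  rw [add_sub_cancel_right] at hm2
  simp only [smul_eq_mul] at hm1 hm2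
  unfold mellin
  rw [add_sub_cancel_right]
  simp only [smul_eq_mul]
  have hnv {c : ℝ} {t : ℝ} (ht : t ∈ Ioi (0:ℝ)) (hh : ‖f t‖ ≤ t ^ c) : ‖f t * ((t : ℂ) ^ s / s)‖ ≤ t ^ (c + s.re) / ‖s‖ := by
    have ht' : 0 < t := ht
    rw [norm_mul, norm_div, Complex.norm_cpow_eq_rpow_re_of_pos ht, Real.rpow_add ht', mul_div_assoc]
    gcongr
  have key := integral_Ioi_mul_deriv_eq_deriv_mul (a := 0) (u := f) (u' := f')
    (v := fun t : ℝ => (t : ℂ) ^ s / s) (v' := fun t : ℝ => (t : ℂ) ^ (s - 1)) (a' := 0) (b' := 0) hf ?_ ?_ ?_ ?_ ?_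
  · rw [show (fun t : ℝ => (t : ℂ) ^ (s - 1) * f t) = fun t : ℝ => f t * (t : ℂ) ^ (s - 1) by ext; ring, key,
      ← integral_const_mul, sub_zero, zero_sub, ← integral_neg]
    congr 1; ext t; ring
  · intro t ht
    have := hasDerivAt_ofReal_cpow_const (ne_of_gt ht) (r := s) hs0
    refine (this.div_const s).congr_deriv ?_
    field_simp
  · refine hm1.congr_fun (fun t _ => ?_) measurableSet_Ioi
    simp [mul_comm]
  · refine IntegrableOn.congr_fun (hm2.div_const s) (fun t _ => ?_) measurableSet_Ioi
    simp; ring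
  · refine squeeze_zero_norm' (a := fun t => t ^ (p + 1 + s.re) / ‖s‖) ?_ ?_
    · filter_upwards [hzero] with t ht using hnv ht (h1 t ht)
    · have h0 : Tendsto (fun t : ℝ => t ^ (p + 1 + s.re)) (𝓝 0) (𝓝 (0 ^ (p + 1 + s.re))) :=
        (Real.continuousAt_rpow_const 0 _ (Or.inr (by linarith))).tendsto
      rw [Real.zero_rpow (by linarith)] at h0
      simpa using (h0.mono_left nhdsWithin_le_nhds).div_const ‖s‖
  · refine squeeze_zero_norm' (a := fun t => t ^ (p + s.re) / ‖s‖) ?_ ?_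
    · filter_upwards [htop] with t ht using hnv ht (h2 t ht)
    · have := tendsto_rpow_neg_atTop (y := -(p + s.re)) (by linarith)
      rw [neg_neg] at this
      simpa using this.div_const ‖s‖

open Set in
lemma mellin_psi (s : ℂ) (hs1 : -2 < s.re) (hs2 : s.re < -1) :
    mellin (fun t => (psi t : ℂ)) s = Complex.Gamma s := by
  have hs0 : s ≠ 0 := by rintro rfl; simp at hs2; linarith
  have hs10 : s + 1 ≠ 0 := by
    intro h; have := congrArg Complex.re h; simp at this; linarith
  have e1 := mellin_ibp (fun t => (psi t : ℂ)) (fun t => ((1 - Real.exp (-t) : ℝ) : ℂ)) 1 s ?_ ?_ ?_ ?_ ?_ ?_ ?_ ?_ hs0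
  have e2 := mellin_ibp (fun t => ((1 - Real.exp (-t) : ℝ) : ℂ)) (fun t => ((Real.exp (-t) : ℝ) : ℂ)) 0 (s + 1) ?_ ?_ ?_ ?_ ?_ ?_ ?_ ?_ hs10
  · rw [e1, e2, ← Complex.GammaIntegral_eq_mellin, ← Complex.Gamma_eq_integral (by simp; linarith),
      Complex.Gamma_add_one _ hs10, Complex.Gamma_add_one _ hs0]
    field_simp
  · intro t ht
    have : HasDerivAt (fun t : ℝ => 1 - Real.exp (-t)) (Real.exp (-t)) t := by
      have := ((hasDerivAt_neg t).exp).const_sub 1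
      simpa using this
    exact this.ofReal_comp
  · fun_prop
  all_goals try (intro t ht; have ht' : 0 < t := ht; have h5 : Real.exp (-t) ≤ 1 := Real.exp_le_one_iff.mpr (by linarith); have h6 := Real.add_one_le_exp (-t); have h7 := Real.exp_pos (-t); have h8 := Real.add_one_le_exp (t))
  · rw [Complex.norm_real, Real.norm_of_nonneg (by linarith)]; norm_num; linarith
  · rw [Complex.norm_real, Real.norm_of_nonneg (by linarith)]; norm_num; linarith
  · rw [Complex.norm_real, Real.norm_of_nonneg (by linarith)]; norm_num; linarith
  · rw [Complex.norm_real, Real.norm_of_nonneg (by linarith)]; norm_num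
    rw [Real.rpow_neg_one, Real.exp_neg]; gcongr; linarith
  · simp; linarith
  · simp; linarith
  · have : HasDerivAt psi (1 - Real.exp (-t)) t := by
      unfold psi
      have := ((((hasDerivAt_neg t).exp).sub_const 1).add (hasDerivAt_id t))
      refine this.congr_deriv ?_; ring
    exact this.ofReal_comp
  · fun_prop
  · rw [Complex.norm_real, Real.norm_of_nonneg (psi_nonneg t)]; norm_num; exact psi_le_sq t ht'.le
  · rw [Complex.norm_real, Real.norm_of_nonneg (psi_nonneg t)]; norm_num; exact psi_le t ht'.le
  · rw [Complex.norm_real, Real.norm_of_nonneg (by linarith)]; norm_num; linarith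
  · rw [Complex.norm_real, Real.norm_of_nonneg (by linarith)]; norm_num; linarith
  · norm_num; linarith
  · linarith

def F0 (x : ℝ) : ℂ := ((Real.exp (-gExp * (Real.log 2 * x)) * psi (Real.exp (Real.log 2 * x)) : ℝ) : ℂ)

lemma F0_cont : Continuous F0 := by
  unfold F0
  have := psi_cont
  fun_prop

open scoped FourierTransform in
lemma F0_fourier (k : ℤ) : 𝓕 F0 (k : ℝ) = (1 / (Real.log 2 : ℂ)) * Complex.Gamma (-(gExp : ℂ) - chiK k) := by
  have hL := log2_pos
  have hre : (-(gExp : ℂ) - chiK k).re = -gExp := by simp [chiK_re]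
  have him : (-(gExp : ℂ) - chiK k).im = -(2 * k * Real.pi / Real.log 2) := by simp [chiK_im]
  rw [← mellin_psi _ (by rw [hre]; have := g_lt; linarith) (by rw [hre]; have := g_gt; linarith),
    mellin_eq_fourier, hre, him, Real.fourier_real_eq_integral_exp_smul, Real.fourier_real_eq_integral_exp_smul]
  have key := MeasureTheory.Measure.integral_comp_mul_left (fun v : ℝ =>
    Complex.exp (↑(-2 * Real.pi * v * (-(2 * ↑k * Real.pi / Real.log 2) / (2 * Real.pi))) * I) •
      (Real.exp (- -gExp * v) • (psi (Real.exp (-v)) : ℂ))) (-Real.log 2)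
  have e : |(-Real.log 2)⁻¹| = 1 / Real.log 2 := by rw [abs_inv, abs_neg, abs_of_pos hL, one_div]
  rw [e] at key
  have key2 := congrArg (fun z => z) key
  rw [Complex.real_smul] at key2
  rw [show (1 / (Real.log 2 : ℂ)) = ((1 / Real.log 2 : ℝ) : ℂ) by rw [Complex.ofReal_div]; norm_num, ← key2]
  congr 1; ext x
  unfold F0
  rw [smul_eq_mul, smul_eq_mul, Complex.real_smul, ← Complex.ofReal_mul]
  have hpi := Real.pi_ne_zero
  congr 4
  · field_simp
  · ring
  · ring_nf

lemma F0_bound : ∃ C : ℝ, ∀ x : ℝ, x ≠ 0 → ‖F0 x‖ ≤ C * |x| ^ (-2 : ℝ) := by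
  have hL := log2_pos
  have hg1 := g_gt
  have hg2 := g_lt
  set c := min ((gExp - 1) * Real.log 2) ((2 - gExp) * Real.log 2) with hc
  have hc0 : 0 < c := lt_min (by apply mul_pos <;> linarith) (by apply mul_pos <;> linarith)
  have hc1 : c ≤ (gExp - 1) * Real.log 2 := min_le_left _ _
  have hc2 : c ≤ (2 - gExp) * Real.log 2 := min_le_right _ _
  refine ⟨2 / c ^ 2, fun x hx => ?_⟩
  have hxp : 0 < |x| := abs_pos.mpr hx
  have h1 : ‖F0 x‖ ≤ Real.exp (-(c * |x|)) := by
    unfold F0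
    rw [Complex.norm_real, Real.norm_of_nonneg (mul_nonneg (Real.exp_pos _).le (psi_nonneg _))]
    rcases le_total 0 x with h | h
    · calc _ ≤ Real.exp (-gExp * (Real.log 2 * x)) * Real.exp (Real.log 2 * x) := by
            gcongr; exact psi_le _ (Real.exp_pos _).le
        _ ≤ _ := by
            rw [← Real.exp_add, Real.exp_le_exp, abs_of_nonneg h]; nlinarith
    · calc _ ≤ Real.exp (-gExp * (Real.log 2 * x)) * (Real.exp (Real.log 2 * x)) ^ 2 := by
            gcongr; exact psi_le_sq _ (Real.exp_pos _).le
        _ ≤ _ := by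
            rw [← Real.exp_nat_mul, ← Real.exp_add, Real.exp_le_exp, abs_of_nonpos h]; push_cast; nlinarith
  refine h1.trans ?_
  rw [Real.exp_neg, Real.rpow_neg hxp.le, Real.rpow_two]
  have h2 := Real.quadratic_le_exp_of_nonneg (x := c * |x|) (by positivity)
  have h3 : (c * |x|) ^ 2 / 2 ≤ Real.exp (c * |x|) := by
    have : 0 < c * |x| := by positivity
    linarith
  calc (Real.exp (c * |x|))⁻¹ ≤ ((c * |x|) ^ 2 / 2)⁻¹ := by gcongr
    _ = _ := by field_simp

open scoped FourierTransform in
lemma poisson_F0 (x : ℝ) : ∑' l : ℤ, F0 (x + l) =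
    ∑' k : ℤ, (1 / (Real.log 2 : ℂ)) * Complex.Gamma (-(gExp : ℂ) - chiK k) *
      Complex.exp (2 * (Real.pi : ℂ) * Complex.I * (k : ℂ) * (x : ℂ)) := by
  rw [Real.tsum_eq_tsum_fourier_of_rpow_decay_of_summable F0_cont (b := 2) (by norm_num)]
  · congr 1; ext k
    rw [F0_fourier, fourier_coe_apply]
    congr 2; push_cast; ring
  · obtain ⟨C, hC⟩ := F0_bound
    refine IsBigO.of_bound C ?_
    filter_upwards [(isCompact_singleton (x := (0:ℝ))).compl_mem_cocompact] with x hx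
    refine (hC x hx).trans (le_of_eq ?_)
    rw [Real.norm_of_nonneg (Real.rpow_nonneg (abs_nonneg x) _)]
  · simp only [F0_fourier]
    apply Summable.mul_left
    obtain ⟨C, hC, h⟩ := Gamma_chi_bound 2 le_rfl
    refine Summable.of_norm_bounded_eventually ((summable_int_pow 2 le_rfl).mul_left C) ?_
    filter_upwards [(Set.finite_singleton (0:ℤ)).compl_mem_cofinite] with k hk
    rw [mul_one_div]; exact h k hk

/-- the main term as a harmonic sum -/
lemma main_term (n : ℕ) (hn : 1 ≤ n) :
    ((kappa0 : ℂ) + kappaFun (Real.logb 2 n)) * (((n : ℝ) ^ gExp : ℝ) : ℂ) =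
      ((-(PiProd / 9) * ∑' l : ℤ, (3 : ℝ) ^ l * psi ((2 : ℝ) ^ (-l) * n) : ℝ) : ℂ) := by
  have hL := log2_pos
  have hn0 : (0 : ℝ) < n := by exact_mod_cast hn
  set u := Real.logb 2 n with hu
  have h1 : (kappa0 : ℂ) + kappaFun u = ∑' k : ℤ, kappaCoef k * Complex.exp (2 * (Real.pi : ℂ) * Complex.I * (k : ℂ) * (u : ℂ)) := by
    have hs : Summable (fun k : ℤ => kappaCoef k * Complex.exp (2 * (Real.pi : ℂ) * Complex.I * (k : ℂ) * (u : ℂ))) := by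
      refine Summable.of_norm_bounded kappaCoef_summable (fun k => ?_)
      rw [norm_mul, Complex.norm_exp]; simp
    rw [hs.tsum_eq_add_tsum_ite 0]
    congr 1
    simp [kappaCoef_zero]
  have h2 : (kappa0 : ℂ) + kappaFun u = ((-(PiProd / 9) : ℝ) : ℂ) * ∑' l : ℤ, F0 (u + l) := by
    rw [h1, poisson_F0, ← tsum_mul_left]
    congr 1; ext k
    rw [kappaCoef_eq]
    have hL' : (Real.log 2 : ℂ) ≠ 0 := by exact_mod_cast hL.ne'
    have e9 : ((PiProd / (9 * Real.log 2) : ℝ) : ℂ) = PiProd / (9 * (Real.log 2 : ℂ)) := by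
      rw [Complex.ofReal_div, Complex.ofReal_mul]; norm_num
    rw [e9, Complex.ofReal_neg, Complex.ofReal_div, Complex.ofReal_ofNat]
    generalize (Real.log 2 : ℂ) = L at *
    field_simp
  rw [h2, Complex.ofReal_mul, mul_assoc]
  congr 1
  rw [← tsum_mul_right, Complex.ofReal_tsum, ← (Equiv.neg ℤ).tsum_eq]
  congr 1; ext l
  unfold F0
  rw [← Complex.ofReal_mul]
  congr 1
  have e2 : Real.exp (Real.log 2 * (u + ((Equiv.neg ℤ) l : ℤ))) = (2 : ℝ) ^ (-l) * n := by
    rw [← Real.rpow_def_of_pos (by norm_num), Real.rpow_add (by norm_num), hu, Real.rpow_logb (by norm_num) (by norm_num) hn0,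
      Real.rpow_intCast, mul_comm]; rfl
  have e3 : Real.exp (-gExp * (Real.log 2 * (u + ((Equiv.neg ℤ) l : ℤ)))) * (n : ℝ) ^ gExp = (3 : ℝ) ^ l := by
    have : Real.exp (-gExp * (Real.log 2 * (u + ((Equiv.neg ℤ) l : ℤ)))) = ((2 : ℝ) ^ (-l) * n) ^ (-gExp) := by
      rw [← e2, ← Real.exp_mul]; ring_nf
    rw [this, Real.mul_rpow (by positivity) hn0.le, mul_assoc, ← Real.rpow_add hn0, neg_add_cancel, Real.rpow_zero, mul_one,
      ← two_rpow_g, ← Real.rpow_intCast, ← Real.rpow_intCast, ← Real.rpow_mul (by norm_num), ← Real.rpow_mul (by norm_num)]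
    congr 1; push_cast; ring
  rw [e2, mul_right_comm, e3]


lemma summable_int_geom (r : ℝ) (h0 : 0 ≤ r) (h1 : r < 1) (m : ℕ) :
    Summable (fun i : ℤ => (1 + |(i : ℝ)|) ^ m * r ^ i.natAbs) := by
  have hr : ‖r‖ < 1 := by rwa [Real.norm_of_nonneg h0]
  have h : Summable (fun i : ℕ => (1 + (i : ℝ)) ^ m * r ^ i) := by
    have h2 : Summable (fun i : ℕ => 2 ^ m * ((i : ℝ) ^ m * r ^ i + r ^ i)) :=
      ((summable_pow_mul_geometric_of_norm_lt_one m hr).add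
      (summable_geometric_of_lt_one h0 h1)).mul_left (2 ^ m)
    refine Summable.of_nonneg_of_le (fun i => by positivity) (fun i => ?_) h2
    have h3 : (1 + (i : ℝ)) ^ m ≤ 2 ^ m * ((i : ℝ) ^ m + 1) := by
      rcases Nat.eq_zero_or_pos i with rfl | hi
      · simp
        have : (1 : ℝ) ≤ 2 ^ m := one_le_pow₀ (by norm_num)
        have : (0 : ℝ) ≤ 0 ^ m := by positivity
        nlinarith
      · have hi' : (1 : ℝ) ≤ i := by exact_mod_cast hi
        calc (1 + (i : ℝ)) ^ m ≤ (2 * i) ^ m := by gcongr; linarith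
          _ = 2 ^ m * (i : ℝ) ^ m := by rw [mul_pow]
          _ ≤ _ := by gcongr; linarith
    calc _ ≤ 2 ^ m * ((i : ℝ) ^ m + 1) * r ^ i := by gcongr
      _ = _ := by ring
  apply Summable.of_nat_of_neg
  · simpa using h
  · simpa using h

def Wt (x : ℝ) (l : ℤ) : ℝ := (3 / 2 : ℝ) ^ l * min 1 (x * 2 ^ (-l))

lemma Wt_nonneg (x : ℝ) (hx : 0 ≤ x) (l : ℤ) : 0 ≤ Wt x l := by
  unfold Wt; have : 0 ≤ min 1 (x * (2:ℝ) ^ (-l)) := le_min (by norm_num) (by positivity)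
  positivity

lemma Wt_two (i : ℤ) : Wt 2 i ≤ 2 * (3 / 4 : ℝ) ^ i.natAbs := by
  unfold Wt
  rcases Int.natAbs_eq i with h | h
  · rw [h]; simp only [Int.natAbs_natCast, zpow_natCast, zpow_neg]
    calc _ ≤ (3 / 2 : ℝ) ^ i.natAbs * (2 * (2 ^ i.natAbs)⁻¹) := by gcongr; exact min_le_right _ _
      _ = 2 * ((3 / 2 : ℝ) * 2⁻¹) ^ i.natAbs := by rw [mul_pow, inv_pow]; ring
      _ = _ := by norm_num
  · rw [h]; simp only [Int.natAbs_neg, Int.natAbs_natCast, zpow_neg, zpow_natCast]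
    calc _ ≤ ((3 / 2 : ℝ) ^ i.natAbs)⁻¹ * 1 := by gcongr; exact min_le_left _ _
      _ = (2 / 3 : ℝ) ^ i.natAbs := by rw [mul_one, ← inv_pow]; norm_num
      _ ≤ (3 / 4 : ℝ) ^ i.natAbs := pow_le_pow_left₀ (by norm_num) (by norm_num) _
      _ ≤ _ := by have : 0 ≤ (3 / 4 : ℝ) ^ i.natAbs := by positivity
                  linarith

lemma three_half_zpow (J : ℤ) : (3 / 2 : ℝ) ^ J = ((2 : ℝ) ^ J) ^ (gExp - 1) := by
  have : (3 / 2 : ℝ) = 2 ^ (gExp - 1) := by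
    rw [Real.rpow_sub (by norm_num), two_rpow_g]; norm_num
  rw [this, ← Real.rpow_intCast, ← Real.rpow_intCast, ← Real.rpow_mul (by norm_num), ← Real.rpow_mul (by norm_num)]
  congr 1; ring

lemma Wt_shift (x : ℝ) (hx : 0 < x) : ∃ J : ℤ, (3 / 2 : ℝ) ^ J ≤ x ^ (gExp - 1) ∧ 
    ∀ i : ℤ, Wt x (i + J) ≤ (3 / 2 : ℝ) ^ J * (2 * (3 / 4 : ℝ) ^ i.natAbs) := by
  obtain ⟨J, h1, h2⟩ := exists_mem_Ico_zpow hx (one_lt_two)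
  refine ⟨J, ?_, fun i => ?_⟩
  · rw [three_half_zpow]; gcongr
    have := g_gt; linarith
  · refine le_trans ?_ (mul_le_mul_of_nonneg_left (Wt_two i) (by positivity))
    unfold Wt
    rw [zpow_add₀ (by norm_num), mul_comm ((3/2 : ℝ) ^ i), mul_assoc]
    refine mul_le_mul_of_nonneg_left (mul_le_mul_of_nonneg_left (min_le_min le_rfl ?_) (by positivity)) (by positivity)
    rw [neg_add, zpow_add₀ (by norm_num), mul_comm ((2:ℝ) ^ (-i)), ← mul_assoc]
    gcongr
    rw [zpow_neg, ← div_eq_mul_inv, div_le_iff₀ (by positivity)]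
    rw [zpow_add_one₀ (by norm_num)] at h2; linarith

lemma Wt_summable (x : ℝ) (hx : 0 < x) : Summable (Wt x) := by
  obtain ⟨J, _, h⟩ := Wt_shift x hx
  rw [← (Equiv.addRight J).summable_iff]
  refine Summable.of_nonneg_of_le (fun i => Wt_nonneg x hx.le _) (fun i => h i) ?_
  apply Summable.mul_left
  apply Summable.mul_left
  simpa using summable_int_geom (3/4) (by norm_num) (by norm_num) 0

lemma Wt_sum_le : ∃ C : ℝ, 0 ≤ C ∧ ∀ x : ℝ, 0 < x → ∑' l, Wt x l ≤ C * x ^ (gExp - 1) := by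
  refine ⟨∑' i : ℤ, 2 * (3 / 4 : ℝ) ^ i.natAbs, tsum_nonneg fun i => by positivity, fun x hx => ?_⟩
  obtain ⟨J, hJ, h⟩ := Wt_shift x hx
  have hg : Summable (fun i : ℤ => 2 * (3 / 4 : ℝ) ^ i.natAbs) := by
    apply Summable.mul_left
    simpa using summable_int_geom (3/4) (by norm_num) (by norm_num) 0
  rw [← (Equiv.addRight J).tsum_eq]
  calc _ ≤ ∑' i : ℤ, (3 / 2 : ℝ) ^ J * (2 * (3 / 4 : ℝ) ^ i.natAbs) :=
        Summable.tsum_le_tsum (fun i => h i) ((Equiv.addRight J).summable_iff.mpr (Wt_summable x hx)) (hg.mul_left _)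
    _ = (3 / 2 : ℝ) ^ J * ∑' i : ℤ, (2 * (3 / 4 : ℝ) ^ i.natAbs) := tsum_mul_left
    _ ≤ _ := by
        rw [mul_comm]; gcongr

def mco (b : ℝ) (n : ℕ) : ℝ := b * (n + 1) - 1 + (1 / (1 + b)) ^ (n + 1)

lemma rho_le (b : ℝ) (hb : 0 < b) (n : ℕ) : (1 / (1 + b)) ^ n ≤ 1 / (1 + n * b) := by
  rw [one_div_pow]
  have := one_add_mul_le_pow (a := b) (by linarith) n
  gcongr

lemma le_rho (b : ℝ) (hb : 0 < b) (n : ℕ) : 1 - n * b ≤ (1 / (1 + b)) ^ n := by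
  have h := one_add_mul_le_pow (a := 1 / (1 + b) - 1) (by have : 0 < 1 / (1+b) := by positivity
                                                          linarith) n
  have h2 : -b ≤ 1 / (1 + b) - 1 := by
    rw [neg_le_sub_iff_le_add, ← sub_le_iff_le_add, le_div_iff₀ (by linarith)]; nlinarith
  have h3 : 1 + (1 / (1 + b) - 1) = 1 / (1 + b) := by ring
  rw [h3] at h
  have : (n : ℝ) * (-b) ≤ n * (1 / (1 + b) - 1) := by gcongr
  linarith

lemma mco_nonneg (b : ℝ) (hb : 0 < b) (n : ℕ) : 0 ≤ mco b n := by
  unfold mco; have := le_rho b hb (n + 1); push_cast at this; linarith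

lemma rho_le_one (b : ℝ) (hb : 0 < b) (n : ℕ) : (1 / (1 + b)) ^ n ≤ 1 := by
  apply pow_le_one₀ (by positivity)
  rw [div_le_one (by linarith)]; linarith

lemma mco_le (b : ℝ) (hb : 0 < b) (n : ℕ) : mco b n ≤ b * ((n + 1) ^ 2 * min 1 b) := by
  have hn : (0 : ℝ) ≤ n := Nat.cast_nonneg n
  rcases le_total 1 b with h | h
  · rw [min_eq_left h]
    have := rho_le_one b hb (n + 1)
    unfold mco; nlinarith [mul_nonneg hb.le hn, mul_nonneg hb.le (mul_nonneg hn hn)]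
  · rw [min_eq_right h]
    have h1 := rho_le b hb (n + 1)
    have h2 : 1 / (1 + ((n + 1 : ℕ) : ℝ) * b) ≤ 1 - (n + 1) * b + (n + 1) ^ 2 * b ^ 2 := by
      rw [div_le_iff₀ (by positivity)]; push_cast
      have : 0 ≤ ((n + 1) * b) ^ 3 := by positivity
      nlinarith
    unfold mco; nlinarith

lemma mco_sub (b : ℝ) (hb : 0 < b) (n : ℕ) (hn : 1 ≤ n) :
    |mco b n - psi (b * n)| ≤ 4 * (b * min 1 (n * b)) := by
  have hn1 : (1 : ℝ) ≤ n := by exact_mod_cast hn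
  set ρ := 1 / (1 + b) with hρ
  have hρ0 : 0 < ρ := by positivity
  have hρb : ρ * (1 + b) = 1 := by rw [hρ]; field_simp
  have e : mco b n - psi (b * n) = b * (1 - ρ ^ (n + 1)) + (ρ ^ n - Real.exp (-b) ^ n) := by
    unfold mco psi
    rw [← Real.exp_nat_mul, show (n : ℝ) * -b = -(b * n) by ring, ← hρ]
    have : b * ρ ^ (n + 1) + ρ ^ (n + 1) = ρ ^ n := by rw [pow_succ]; linear_combination ρ ^ n * hρb
    linear_combination this
  have hexp : Real.exp (-b) ≤ ρ := by
    rw [hρ, Real.exp_neg, one_div]; gcongr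
    have := Real.add_one_le_exp b; linarith
  have hexp2 : ρ - Real.exp (-b) ≤ b ^ 2 := by
    have h1 := Real.add_one_le_exp (-b)
    have h2 : ρ ≤ 1 - b + b ^ 2 := by
      rw [hρ, div_le_iff₀ (by linarith)]; nlinarith [pow_pos hb 3]
    linarith
  have h1 : 0 ≤ ρ ^ n - Real.exp (-b) ^ n := by
    have := Real.exp_pos (-b)
    have : Real.exp (-b) ^ n ≤ ρ ^ n := by gcongr
    linarith
  have hr1 := rho_le_one b hb (n + 1)
  have hr2 := le_rho b hb (n + 1)
  have hr3 := rho_le_one b hb n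
  have hr4 := rho_le b hb n
  rw [← hρ] at hr1 hr2 hr3 hr4
  have hbern : ρ ^ n - Real.exp (-b) ^ n ≤ n * (b ^ 2 * (ρ ^ n * (1 + b))) := by
    have hx := one_add_mul_le_pow (a := Real.exp (-b) / ρ - 1) (by
      have : 0 < Real.exp (-b) / ρ := div_pos (Real.exp_pos _) hρ0
      linarith) n
    have e1 : (1 + (Real.exp (-b) / ρ - 1)) ^ n = Real.exp (-b) ^ n / ρ ^ n := by
      rw [← div_pow]; ring
    rw [e1, le_div_iff₀ (by positivity)] at hx
    have e2 : Real.exp (-b) / ρ - 1 = - (ρ - Real.exp (-b)) * (1 + b) := by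
      rw [hρ]; field_simp; ring
    rw [e2] at hx
    have : (n : ℝ) * ((ρ - Real.exp (-b)) * (ρ ^ n * (1 + b))) ≤ n * (b ^ 2 * (ρ ^ n * (1 + b))) := by gcongr
    nlinarith
  rw [e, abs_of_nonneg (add_nonneg (mul_nonneg hb.le (by linarith)) h1)]
  have hA : 1 - ρ ^ (n + 1) ≤ 2 * min 1 (n * b) := by
    rw [mul_min_of_nonneg _ _ (by norm_num)]
    apply le_min
    · have : 0 < ρ ^ (n + 1) := by positivity
      linarith
    · push_cast at hr2; nlinarith
  have hB : ρ ^ n - Real.exp (-b) ^ n ≤ 2 * (b * min 1 (n * b)) := by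
    have hpe : 0 < Real.exp (-b) ^ n := pow_pos (Real.exp_pos _) n
    have hnr : n * b * ρ ^ n ≤ 1 := by
      rw [le_div_iff₀ (by positivity)] at hr4
      have : 0 < ρ ^ n := by positivity
      nlinarith
    have hnr2 : ρ ^ n * (1 + b) ≤ 1 := by
      obtain ⟨m, rfl⟩ : ∃ m, n = m + 1 := ⟨n - 1, by omega⟩
      rw [pow_succ, mul_assoc, hρb, mul_one]; exact rho_le_one b hb m
    have g1 : ρ ^ n - Real.exp (-b) ^ n ≤ 2 * b := by
      rcases le_total b 1 with h | h
      · have : n * (b ^ 2 * (ρ ^ n * (1 + b))) ≤ b * (1 * (1 + b)) := by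
          calc _ = b * ((n * b * ρ ^ n) * (1 + b)) := by ring
            _ ≤ _ := by gcongr
        nlinarith
      · linarith
    have g2 : ρ ^ n - Real.exp (-b) ^ n ≤ b * (n * b) := by
      calc _ ≤ n * (b ^ 2 * (ρ ^ n * (1 + b))) := hbern
        _ ≤ n * (b ^ 2 * 1) := by gcongr
        _ = _ := by ring
    rcases le_total 1 (n * b) with h | h
    · rw [min_eq_left h]; linarith
    · rw [min_eq_right h]
      have : 0 ≤ b * (n * b) := by positivity
      linarith
  have := mul_le_mul_of_nonneg_left hA hb.le
  linarith

lemma three_two (l : ℤ) : (3 : ℝ) ^ l * 2 ^ (-l) = (3 / 2) ^ l := by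
  rw [zpow_neg, div_zpow, div_eq_mul_inv]

def mTerm (n : ℕ) (l : ℤ) : ℝ := (3 : ℝ) ^ l * mco (2 ^ (-l)) n

lemma mTerm_nonneg (n : ℕ) (l : ℤ) : 0 ≤ mTerm n l := 
  mul_nonneg (by positivity) (mco_nonneg _ (by positivity) _)

lemma mTerm_le (n : ℕ) (l : ℤ) : mTerm n l ≤ (n + 1) ^ 2 * Wt 1 l := by
  unfold mTerm Wt
  have h := mco_le ((2 : ℝ) ^ (-l)) (by positivity) n
  calc _ ≤ (3 : ℝ) ^ l * (2 ^ (-l) * ((n + 1) ^ 2 * min 1 (2 ^ (-l)))) := by gcongr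
    _ = _ := by rw [← mul_assoc, three_two]; ring_nf

lemma mTerm_summable (n : ℕ) : Summable (mTerm n) :=
  Summable.of_nonneg_of_le (mTerm_nonneg n) (mTerm_le n) ((Wt_summable 1 one_pos).mul_left _)

lemma psiTerm_summable (n : ℕ) (hn : 1 ≤ n) : Summable (fun l : ℤ => (3 : ℝ) ^ l * psi ((2 : ℝ) ^ (-l) * n)) := by
  have hn0 : (0 : ℝ) < n := by exact_mod_cast hn
  refine Summable.of_nonneg_of_le (fun l => mul_nonneg (by positivity) (psi_nonneg _)) (fun l => ?_) 
    ((Wt_summable n hn0).mul_left (n : ℝ))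
  unfold Wt
  have h1 := psi_le ((2 : ℝ) ^ (-l) * n) (by positivity)
  have h2 := psi_le_sq ((2 : ℝ) ^ (-l) * n) (by positivity)
  have : psi ((2 : ℝ) ^ (-l) * n) ≤ ((2:ℝ) ^ (-l) * n) * min 1 ((n:ℝ) * (2:ℝ) ^ (-l)) := by
    rw [mul_min_of_nonneg _ _ (by positivity)]
    apply le_min
    · linarith
    · linarith
  calc _ ≤ (3 : ℝ) ^ l * (((2:ℝ) ^ (-l) * n) * min 1 ((n:ℝ) * (2:ℝ) ^ (-l))) := by gcongr
    _ = _ := by rw [← three_two]; ring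

lemma model_approx : ∃ C : ℝ, 0 ≤ C ∧ ∀ n : ℕ, 1 ≤ n →
    |∑' l, mTerm n l - ∑' l : ℤ, (3 : ℝ) ^ l * psi ((2 : ℝ) ^ (-l) * n)| ≤ C * (n : ℝ) ^ (gExp - 1) := by
  obtain ⟨C, hC, h⟩ := Wt_sum_le
  refine ⟨4 * C, by positivity, fun n hn => ?_⟩
  have hn0 : (0 : ℝ) < n := by exact_mod_cast hn
  rw [← (mTerm_summable n).tsum_sub (psiTerm_summable n hn), ← Real.norm_eq_abs]
  refine (tsum_of_norm_bounded ((Wt_summable n hn0).mul_left 4).hasSum (fun l => ?_)).trans ?_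
  · unfold mTerm Wt
    rw [← mul_sub, Real.norm_eq_abs, abs_mul, abs_of_pos (by positivity)]
    have := mco_sub ((2 : ℝ) ^ (-l)) (by positivity) n hn
    calc _ ≤ (3 : ℝ) ^ l * (4 * ((2:ℝ) ^ (-l) * min 1 ((n : ℝ) * (2:ℝ) ^ (-l)))) := by gcongr
      _ = _ := by rw [← three_two]; ring
  · rw [tsum_mul_left, mul_assoc]; gcongr; exact h n hn0

/-- the model function -/
def Bm (s : ℂ) : ℂ := ∑' l : ℤ, (((3 : ℝ) ^ l * (2 : ℝ) ^ (-l) : ℝ) : ℂ) * ((((2 : ℝ) ^ (-l) : ℝ) : ℂ) / (s + ((2 : ℝ) ^ (-l) : ℝ)))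

lemma mco_hasSum (b : ℝ) (hb : 0 < b) (q : ℂ) (hq : ‖q‖ < 1 / 2) :
    HasSum (fun n : ℕ => (mco b n : ℂ) * (2 * q) ^ n) ((b : ℂ) * b / ((1 - 2 * q) ^ 2 * (1 - 2 * q + b))) := by
  have h2q : ‖2 * q‖ < 1 := by rw [norm_mul]; simp; linarith
  have hs : (1 - 2 * q) ≠ 0 := by
    intro h; have : 2 * q = 1 := by linear_combination -h
    rw [this] at h2q; simp at h2q
  have hb1 : (1 + (b : ℂ)) ≠ 0 := by
    have : (1 + b : ℝ) ≠ 0 := by positivity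
    exact_mod_cast this
  have hsb : (1 - 2 * q + b) ≠ 0 := by
    intro h
    have : 2 * q = ((1 + b : ℝ) : ℂ) := by push_cast; linear_combination -h
    rw [this, Complex.norm_real, Real.norm_of_nonneg (by linarith)] at h2q; linarith
  have h1 : HasSum (fun n : ℕ => (2 * q) ^ n) (1 / (1 - 2 * q)) := by
    rw [one_div]; exact hasSum_geometric_of_norm_lt_one h2q
  have h2 : HasSum (fun n : ℕ => (n : ℂ) * (2 * q) ^ n) (2 * q / (1 - 2 * q) ^ 2) :=
    hasSum_coe_mul_geometric_of_norm_lt_one h2q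
  have h3 : HasSum (fun n : ℕ => (1 / (1 + (b:ℂ)) * (2 * q)) ^ n) (1 / (1 - 1 / (1 + (b:ℂ)) * (2 * q))) := by
    rw [one_div (1 - _)]; apply hasSum_geometric_of_norm_lt_one
    rw [norm_mul]
    have : ‖1 / (1 + (b : ℂ))‖ ≤ 1 := by
      rw [show (1 / (1 + (b:ℂ))) = ((1 / (1 + b) : ℝ) : ℂ) by push_cast; rfl, Complex.norm_real, Real.norm_of_nonneg (by positivity),
        div_le_one (by linarith)]; linarith
    nlinarith [norm_nonneg (2 * q)]
  have h4 := ((h2.add h1).mul_left (b : ℂ)).sub h1 |>.add (h3.mul_left (1 / (1 + (b : ℂ))))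
  have e5 : (fun n : ℕ => (mco b n : ℂ) * (2 * q) ^ n) = fun n : ℕ =>
      (b : ℂ) * ((n : ℂ) * (2 * q) ^ n + (2 * q) ^ n) - (2 * q) ^ n
        + 1 / (1 + (b : ℂ)) * (1 / (1 + (b : ℂ)) * (2 * q)) ^ n := by
    ext n
    unfold mco
    push_cast
    rw [mul_pow (1 / (1 + (b : ℂ))), pow_succ]
    ring
  have e6 : (b : ℂ) * b / ((1 - 2 * q) ^ 2 * (1 - 2 * q + b)) =
      (b : ℂ) * (2 * q / (1 - 2 * q) ^ 2 + 1 / (1 - 2 * q)) - 1 / (1 - 2 * q) +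
      1 / (1 + (b : ℂ)) * (1 / (1 - 1 / (1 + (b : ℂ)) * (2 * q))) := by
    have : (1 - 1 / (1 + (b:ℂ)) * (2 * q)) = (1 - 2 * q + b) / (1 + b) := by field_simp; ring
    rw [this]; field_simp; ring
  rw [e5, e6]; exact h4

lemma model_hasSum (q : ℂ) (hq : ‖q‖ < 1 / 2) :
    HasSum (fun n : ℕ => ((2 ^ n * ∑' l, mTerm n l : ℝ) : ℂ) * q ^ n) (Bm (1 - 2 * q) / (1 - 2 * q) ^ 2) := by
  have h2q : ‖2 * q‖ < 1 := by rw [norm_mul]; simp; linarith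
  have hS : Summable (fun p : ℕ × ℤ => (mTerm p.1 p.2 : ℂ) * (2 * q) ^ p.1) := by
    have hg : Summable (fun n : ℕ => ((n : ℝ) + 1) ^ 2 * ‖2 * q‖ ^ n) := by
      have h1 := summable_pow_mul_geometric_of_norm_lt_one 2 (r := ‖2 * q‖) (by simpa using h2q)
      have h2 := summable_pow_mul_geometric_of_norm_lt_one 1 (r := ‖2 * q‖) (by simpa using h2q)
      have h3 := summable_pow_mul_geometric_of_norm_lt_one 0 (r := ‖2 * q‖) (by simpa using h2q)
      refine ((h1.add (h2.mul_left 2)).add h3).congr fun n => ?_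
      simp; ring
    have hp := hg.mul_of_nonneg (Wt_summable 1 one_pos) (fun n => by positivity) (fun l => Wt_nonneg 1 zero_le_one l)
    refine Summable.of_norm_bounded hp (fun p => ?_)
    rw [norm_mul, norm_pow, Complex.norm_real, Real.norm_of_nonneg (mTerm_nonneg _ _)]
    have := mTerm_le p.1 p.2
    calc _ ≤ (((p.1 : ℝ) + 1) ^ 2 * Wt 1 p.2) * ‖2 * q‖ ^ p.1 := by gcongr
      _ = _ := by ring
  have h1 := hS.hasSum.prod_fiberwise (fun n => (hS.prod_factor n).hasSum)
  convert h1 using 1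
  · ext n
    simp only
    rw [tsum_mul_right, ← Complex.ofReal_tsum, mul_pow]; push_cast; ring
  · have hS' := hS.prod_symm
    rw [← (Equiv.prodComm ℤ ℕ).tsum_eq]
    change _ = ∑' p : ℤ × ℕ, (mTerm p.swap.1 p.swap.2 : ℂ) * (2 * q) ^ p.swap.1
    rw [hS'.tsum_prod]
    unfold Bm
    rw [← tsum_div_const]
    congr 1; ext l
    have := ((mco_hasSum ((2:ℝ) ^ (-l)) (by positivity) q hq).mul_left (((3 : ℝ) ^ l : ℝ) : ℂ)).tsum_eq
    simp only [Prod.swap, Equiv.prodComm_apply, mTerm]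
    rw [show (fun c : ℕ => (((3 : ℝ) ^ l * mco (2 ^ (-l)) c : ℝ) : ℂ) * (2 * q) ^ c) = 
      fun c : ℕ => (((3 : ℝ) ^ l : ℝ) : ℂ) * (((mco (2 ^ (-l)) c : ℝ) : ℂ) * (2 * q) ^ c) by
        ext c; rw [Complex.ofReal_mul]; ring, this, Complex.ofReal_mul]
    generalize (((2:ℝ) ^ (-l) : ℝ) : ℂ) = b
    generalize (1 - 2 * q) = t
    simp only [div_eq_mul_inv, mul_inv]
    ring


/-! ### the basic hypergeometric series -/

def cc (q : ℂ) (j : ℕ) : ℂ := ∏ i ∈ Finset.range j, ((1 - aF q * q ^ i) / (1 - q ^ (i + 1)))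

def hh (q x : ℂ) : ℂ := ∑' j : ℕ, cc q j * x ^ j

def Mc : ℝ := Real.exp 10

lemma Mc_pos : 0 < Mc := Real.exp_pos _

lemma norm_one_sub_ge (x : ℂ) : 1 - ‖x‖ ≤ ‖1 - x‖ := by
  have := norm_sub_norm_le (1 : ℂ) x; simpa using this

section basic
variable {q : ℂ}

lemma one_sub_ne (hq : ‖q‖ < 1) : 1 - q ≠ 0 := by
  intro h; have := norm_one_sub_ge q; rw [h, norm_zero] at this; linarith

lemma one_sub_pow_ne (hq : ‖q‖ < 1) (i : ℕ) : 1 - q ^ (i + 1) ≠ 0 := by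
  apply one_sub_ne; rw [norm_pow]; exact pow_lt_one₀ (norm_nonneg _) hq (by omega)

lemma norm_one_sub (hq : ‖q‖ ≤ 0.51) : 0.49 ≤ ‖1 - q‖ := by
  have := norm_one_sub_ge q; linarith

lemma norm_quad (hq : ‖q‖ ≤ 0.51) : 0.229 ≤ ‖1 - q + q ^ 2‖ := by
  have h1 := norm_one_sub hq
  have h2 := norm_sub_norm_le (1 - q) (-q ^ 2)
  have h3 : ‖-q ^ 2‖ ≤ 0.51 ^ 2 := by rw [norm_neg, norm_pow]; gcongr
  rw [sub_neg_eq_add] at h2; norm_num at *; linarith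

lemma quad_ne (hq : ‖q‖ ≤ 0.51) : 1 - q + q ^ 2 ≠ 0 := by
  intro h; have := norm_quad hq; rw [h, norm_zero] at this; norm_num at this

lemma norm_aF (hq : ‖q‖ ≤ 0.51) : ‖aF q‖ ≤ 1.2 := by
  unfold aF
  have := norm_quad hq
  rw [norm_div, norm_pow, div_le_iff₀ (by linarith)]
  have : ‖q‖ ^ 2 ≤ 0.51 ^ 2 := by gcongr
  norm_num at *; linarith

lemma cc_succ (q : ℂ) (j : ℕ) : cc q (j + 1) = cc q j * ((1 - aF q * q ^ j) / (1 - q ^ (j + 1))) := by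
  unfold cc; rw [Finset.prod_range_succ]

lemma cc_zero (q : ℂ) : cc q 0 = 1 := by simp [cc]

lemma factor_bound (hq : ‖q‖ ≤ 0.51) (i : ℕ) :
    ‖(1 - aF q * q ^ i) / (1 - q ^ (i + 1)) - 1‖ ≤ 4 * 0.51 ^ i := by
  have h1 := one_sub_pow_ne (q := q) (by norm_num at *; linarith) i
  have e : (1 - aF q * q ^ i) / (1 - q ^ (i + 1)) - 1 = q ^ i * (q - aF q) / (1 - q ^ (i + 1)) := by
    field_simp; ring
  have h2 := norm_one_sub_ge (q ^ (i + 1))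
  have h3 : ‖q ^ (i + 1)‖ ≤ 0.51 := by
    rw [norm_pow, pow_succ]
    have : ‖q‖ ^ i ≤ 1 := pow_le_one₀ (norm_nonneg _) (by norm_num at *; linarith)
    nlinarith [norm_nonneg q]
  have h4 := norm_sub_le q (aF q)
  have h5 := norm_aF hq
  have hpos : 0 < ‖1 - q ^ (i + 1)‖ := norm_pos_iff.mpr h1
  rw [e, norm_div, norm_mul, norm_pow, div_le_iff₀ hpos]
  have h6 : ‖q - aF q‖ ≤ 1.8 := by norm_num at *; linarith
  have h7 : (1.8 : ℝ) ≤ 4 * ‖1 - q ^ (i + 1)‖ := by norm_num at *; linarith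
  calc ‖q‖ ^ i * ‖q - aF q‖ ≤ 0.51 ^ i * 1.8 := by gcongr
    _ ≤ 0.51 ^ i * (4 * ‖1 - q ^ (i + 1)‖) := by gcongr
    _ = _ := by ring

lemma cc_bound (hq : ‖q‖ ≤ 0.51) (j : ℕ) : ‖cc q j‖ ≤ Mc := by
  have h : ‖cc q j‖ ≤ Real.exp (∑ i ∈ Finset.range j, 4 * (0.51 : ℝ) ^ i) := by
    induction j with
    | zero => simp [cc]
    | succ j ih =>
      rw [cc_succ, norm_mul, Finset.sum_range_succ, Real.exp_add]
      gcongr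
      have h1 := factor_bound hq j
      have h2 := norm_sub_norm_le ((1 - aF q * q ^ j) / (1 - q ^ (j + 1))) 1
      have h3 := Real.add_one_le_exp (4 * (0.51 : ℝ) ^ j)
      rw [norm_one] at h2; linarith
  refine h.trans ?_
  unfold Mc; gcongr
  rw [← Finset.mul_sum]
  have h1 : ∑ i ∈ Finset.range j, (0.51 : ℝ) ^ i ≤ ∑' i : ℕ, (0.51 : ℝ) ^ i :=
    Summable.sum_le_tsum _ (fun i _ => by positivity) (summable_geometric_of_lt_one (by norm_num) (by norm_num))
  rw [tsum_geometric_of_lt_one (by norm_num) (by norm_num)] at h1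
  norm_num at *; linarith

lemma hh_summable (hq : ‖q‖ ≤ 0.51) {x : ℂ} (hx : ‖x‖ < 1) : Summable (fun j => cc q j * x ^ j) := by
  refine Summable.of_norm_bounded ((summable_geometric_of_lt_one (norm_nonneg x) hx).mul_left Mc) (fun j => ?_)
  rw [norm_mul, norm_pow]; gcongr; exact cc_bound hq j

lemma hh_feq (hq : ‖q‖ ≤ 0.51) {x : ℂ} (hx : ‖x‖ < 1) :
    (1 - x) * hh q x = (1 - aF q * x) * hh q (q * x) := by
  have hq1 : ‖q‖ < 1 := by norm_num at *; linarith
  have hqx : ‖q * x‖ < 1 := by rw [norm_mul]; nlinarith [norm_nonneg q, norm_nonneg x]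
  have s1 := hh_summable hq hx
  have s2 := hh_summable hq hqx
  have e1 : hh q x - hh q (q * x) = ∑' j, (cc q j * x ^ j - cc q j * (q * x) ^ j) := (s1.tsum_sub s2).symm
  have e2 : ∑' j, (cc q j * x ^ j - cc q j * (q * x) ^ j) = x * hh q x - aF q * x * hh q (q * x) := by
    rw [(s1.sub s2).tsum_eq_zero_add]
    unfold hh
    rw [← tsum_mul_left, ← tsum_mul_left, ← (s1.mul_left _).tsum_sub (s2.mul_left _)]
    simp only [pow_zero, sub_self, zero_add]
    congr 1; ext j
    rw [cc_succ]
    have := one_sub_pow_ne hq1 j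
    have h3 : cc q j * ((1 - aF q * q ^ j) / (1 - q ^ (j + 1))) * (1 - q ^ (j + 1)) = cc q j * (1 - aF q * q ^ j) := by
      field_simp
    rw [mul_pow, mul_pow]
    linear_combination x ^ (j + 1) * h3
  linear_combination e1 + e2

lemma hh_sub_one (hq : ‖q‖ ≤ 0.51) {x : ℂ} (hx : ‖x‖ < 1) : ‖hh q x - 1‖ ≤ Mc * ‖x‖ * (1 - ‖x‖)⁻¹ := by
  have s1 := hh_summable hq hx
  unfold hh
  rw [s1.tsum_eq_zero_add]
  simp only [cc_zero, pow_zero, mul_one, add_sub_cancel_left]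
  refine tsum_of_norm_bounded ((hasSum_geometric_of_lt_one (norm_nonneg x) hx).mul_left (Mc * ‖x‖)) (fun j => ?_)
  rw [norm_mul, norm_pow, pow_succ]
  have := cc_bound hq (j + 1)
  calc _ ≤ Mc * (‖x‖ ^ j * ‖x‖) := by gcongr
    _ = _ := by ring

lemma av_eq (hq : ‖q‖ ≤ 0.51) : aF q * vF q = uF q * q := by
  have h1 : 1 - q ≠ 0 := one_sub_ne (by norm_num at *; linarith)
  have h2 := quad_ne hq
  unfold aF vF uF; field_simp

lemma vq_eq (hq : ‖q‖ < 1) : vF q * q = q * (1 + q ^ 2 / (1 - q)) := by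
  have h1 : 1 - q ≠ 0 := one_sub_ne hq
  unfold vF; field_simp

lemma vq_bound {r : ℝ} (hr : r < 1) (hq : ‖q‖ ≤ r) : ‖vF q * q‖ ≤ r * (1 + r ^ 2 / (1 - r)) := by
  rw [vq_eq (by linarith), norm_mul]
  have h0 := norm_nonneg q
  have hr0 : 0 < 1 - r := by linarith
  have hr1 : 0 ≤ r := h0.trans hq
  have h1 := norm_one_sub_ge q
  have h2 : ‖1 + q ^ 2 / (1 - q)‖ ≤ 1 + r ^ 2 / (1 - r) := by
    refine (norm_add_le _ _).trans ?_
    rw [norm_one, norm_div, norm_pow]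
    gcongr; linarith
  gcongr

lemma vq_51 (hq : ‖q‖ ≤ 0.51) : ‖vF q * q‖ ≤ 0.8 := by
  refine (vq_bound (by norm_num) hq).trans (by norm_num)

lemma vq_half (hq : ‖q‖ ≤ 1 / 2) : ‖vF q * q‖ ≤ 3 / 4 := by
  refine (vq_bound (by norm_num) hq).trans (by norm_num)

lemma uq_51 (hq : ‖q‖ ≤ 0.51) : ‖uF q * q‖ < 1 := by
  unfold uF
  have := norm_one_sub hq
  rw [div_mul_eq_mul_div, norm_div, norm_mul, div_lt_one (lt_of_lt_of_le (by norm_num) this)]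
  have : ‖q‖ * ‖q‖ ≤ 0.51 * 0.51 := by gcongr
  norm_num at *; linarith

lemma uqm_51 (hq : ‖q‖ ≤ 0.51) (m : ℕ) : 1 - uF q * q ^ (m + 1) ≠ 0 := by
  apply one_sub_ne
  have h1 := uq_51 hq
  rw [pow_succ', ← mul_assoc, norm_mul, norm_pow]
  have : ‖q‖ ^ m ≤ 1 := pow_le_one₀ (norm_nonneg _) (by norm_num at *; linarith)
  nlinarith [norm_nonneg (uF q * q)]

lemma vqm_51 (hq : ‖q‖ ≤ 0.51) (m : ℕ) : ‖vF q * q ^ (m + 1)‖ ≤ 0.8 * ‖q‖ ^ m := by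
  have h1 := vq_51 hq
  rw [pow_succ', ← mul_assoc, norm_mul, norm_pow]
  gcongr

lemma vqm_lt (hq : ‖q‖ ≤ 0.51) (m : ℕ) : ‖vF q * q ^ (m + 1)‖ < 1 := by
  have h1 := vqm_51 hq m
  have : ‖q‖ ^ m ≤ 1 := pow_le_one₀ (norm_nonneg _) (by norm_num at *; linarith)
  norm_num at *; linarith

lemma hh_step (hq : ‖q‖ ≤ 0.51) (m : ℕ) :
    (1 - vF q * q ^ (m + 1)) * hh q (vF q * q ^ (m + 1)) =
      (1 - uF q * q ^ (m + 2)) * hh q (vF q * q ^ (m + 2)) := by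
  have := hh_feq hq (vqm_lt hq m)
  rw [this]
  congr 2
  · rw [← mul_assoc, av_eq hq]; ring
  · ring

lemma hh_ne (hq : ‖q‖ ≤ 0.51) : hh q (vF q * q) ≠ 0 := by
  intro h0
  have h : ∀ m : ℕ, hh q (vF q * q ^ (m + 1)) = 0 := by
    intro m
    induction m with
    | zero => simpa using h0
    | succ m ih =>
      have := hh_step hq m
      rw [ih, mul_zero] at this
      exact (mul_eq_zero.mp this.symm).resolve_left (uqm_51 hq (m + 1))
  have ht : Tendsto (fun m : ℕ => Mc * (0.8 * ‖q‖ ^ m) * 5) atTop (𝓝 (Mc * (0.8 * 0) * 5)) := by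
    refine Tendsto.mul_const _ (Tendsto.const_mul _ (Tendsto.const_mul _ ?_))
    exact tendsto_pow_atTop_nhds_zero_of_lt_one (norm_nonneg _) (by norm_num at *; linarith)
  rw [mul_zero, mul_zero, zero_mul] at ht
  have := ge_of_tendsto' ht (b := 1) (fun m => by
    have h1 := hh_sub_one hq (vqm_lt hq m)
    rw [h m, zero_sub, norm_neg, norm_one] at h1
    have h2 := vqm_51 hq m
    have h3 : ‖q‖ ^ m ≤ 1 := pow_le_one₀ (norm_nonneg _) (by norm_num at *; linarith)
    have h4 : (1 - ‖vF q * q ^ (m + 1)‖)⁻¹ ≤ 5 := by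
      rw [inv_le_comm₀ (by have := vqm_lt hq m; linarith) (by norm_num)]; norm_num at *; linarith
    have := Mc_pos
    have h5 : 0 ≤ (1 - ‖vF q * q ^ (m + 1)‖)⁻¹ := by
      rw [inv_nonneg]; have := vqm_lt hq m; linarith
    calc _ ≤ _ := h1
      _ ≤ _ := by gcongr)
  linarith

def GG (q : ℂ) : ℂ := 1 / ((1 - uF q * q) * hh q (vF q * q))
def Wf (q : ℂ) : ℂ := 2 * q ^ 5 * (1 - q) * GG q
def T1 (q : ℂ) : ℂ := ∑' j : ℕ, cc q j * (vF q * q) ^ j / (1 - 2 * q + q ^ (j + 2))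
def FF (q : ℂ) : ℂ := Wf q * T1 q / (1 - 2 * q) ^ 2 + CF q

lemma PAterm_eq (hq : ‖q‖ < 1 / 4) (m : ℕ) :
    PAterm q (m + 1) = 1 / (1 - q) * GG q * ((-q ^ 2 / (1 - 2 * q)) ^ (m + 1) * hh q (vF q * q ^ (m + 1))) := by
  have hq' : ‖q‖ ≤ 0.51 := by norm_num; linarith
  have h1 : 1 - q ≠ 0 := one_sub_ne (by linarith)
  have hh0 := hh_ne hq'
  have hs : 1 - 2 * q ≠ 0 := one_sub_ne (by rw [norm_mul]; simp; linarith)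
  have hU : ∀ m : ℕ, 1 - q - q ^ (m + 2) ≠ 0 := by
    intro m h
    apply uqm_51 hq' m
    unfold uF
    field_simp
    linear_combination h
  induction m with
  | zero =>
    have h2 := uqm_51 hq' 0
    have h3 := hU 0
    simp only [zero_add, pow_one] at h2 ⊢
    unfold PAterm GG
    have e : 1 - uF q * q = (1 - q - q ^ 2) / (1 - q) := by unfold uF; field_simp
    rw [e]
    simp only [zero_add] at h3
    generalize hh q (vF q * q) = H at *
    norm_num
    field_simp
  | succ m ih =>
    have h2 := uqm_51 hq' (m + 1)
    have hst := hh_step hq' m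
    have e0 : hh q (vF q * q ^ (m + 2)) = (1 - vF q * q ^ (m + 1)) / (1 - uF q * q ^ (m + 2)) * hh q (vF q * q ^ (m + 1)) := by
      rw [div_mul_eq_mul_div, eq_div_iff h2, hst]; ring
    have e1 : PAterm q (m + 1 + 1) = PAterm q (m + 1) * ((-q ^ 2 / (1 - 2 * q)) *
        ((1 - vF q * q ^ (m + 1)) / (1 - uF q * q ^ (m + 2)))) := by
      have e2 : (1 - vF q * q ^ (m + 1)) / (1 - uF q * q ^ (m + 2)) =
          (1 - q - q ^ (m + 1) + q ^ (m + 2) - q ^ (m + 3)) / (1 - q - q ^ (m + 3)) := by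
        have h3 := hU (m + 1)
        have e3 : 1 - vF q * q ^ (m + 1) = (1 - q - q ^ (m + 1) + q ^ (m + 2) - q ^ (m + 3)) / (1 - q) := by
          unfold vF; field_simp; ring
        have e4 : 1 - uF q * q ^ (m + 2) = (1 - q - q ^ (m + 3)) / (1 - q) := by
          unfold uF; field_simp; ring
        rw [e3, e4, div_div_div_cancel_right₀ h1]
      rw [e2]
      unfold PAterm
      simp only [Nat.add_sub_cancel]
      rw [Finset.prod_Icc_succ_top (by omega)]
      have h3 := hU m
      have h4 := hU (m + 1)
      generalize ∏ k ∈ Finset.Icc 1 m, ((1 - q - q ^ k + q ^ (k + 1) - q ^ (k + 2)) / (1 - q - q ^ (k + 1))) = P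
      rw [show m + 1 + 1 + 1 = m + 3 by ring, show m + 1 + 1 = m + 2 by ring, show m + 1 + 2 = m + 3 by ring] at *
      generalize 1 - q - q ^ (m + 1) + q ^ (m + 2) - q ^ (m + 3) = N
      have e5 : ((-1 : ℂ)) ^ (m + 2) * q ^ (2 * (m + 2)) = ((-1) ^ (m + 1) * q ^ (2 * (m + 1))) * (-q ^ 2) := by ring
      rw [e5, pow_succ (1 - 2 * q) (m + 1)]
      generalize (-1 : ℂ) ^ (m + 1) * q ^ (2 * (m + 1)) = Z
      field_simp
    rw [e1, ih, show m + 1 + 1 = m + 2 by ring, e0, pow_succ _ (m + 1)]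
    ring

lemma PAseries_eq (hq : ‖q‖ < 1 / 4) : PAseries q = FF q := by
  have hq' : ‖q‖ ≤ 0.51 := by norm_num; linarith
  have h1 : 1 - q ≠ 0 := one_sub_ne (by linarith)
  have hs : 1 - 2 * q ≠ 0 := one_sub_ne (by rw [norm_mul]; simp; linarith)
  have hs' : 1 / 2 ≤ ‖1 - 2 * q‖ := by
    have := norm_one_sub_ge (2 * q)
    have e : ‖2 * q‖ = 2 * ‖q‖ := by rw [norm_mul]; simp
    linarith
  set z := -q ^ 2 / (1 - 2 * q) with hz
  have hz1 : ‖z‖ ≤ 1 / 8 := by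
    rw [hz, norm_div, norm_neg, norm_pow, div_le_iff₀ (by linarith)]
    have : ‖q‖ ^ 2 ≤ (1 / 4) ^ 2 := by gcongr
    linarith
  have hy := vq_51 hq'
  have hS : Summable (fun p : ℕ × ℕ => z ^ (p.1 + 1) * (cc q p.2 * (vF q * q ^ (p.1 + 1)) ^ p.2)) := by
    have := (summable_geometric_of_lt_one (r := 1 / 8) (by norm_num) (by norm_num)).mul_of_nonneg
      (((summable_geometric_of_lt_one (r := 0.8) (by norm_num) (by norm_num))).mul_left Mc)
      (fun n => by positivity) (fun j => by have := Mc_pos; positivity)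
    refine Summable.of_norm_bounded this (fun p => ?_)
    rw [norm_mul, norm_mul, norm_pow, norm_pow]
    have h3 := cc_bound hq' p.2
    have h4 := vqm_51 hq' p.1
    have h5 : ‖q‖ ^ p.1 ≤ 1 := pow_le_one₀ (norm_nonneg _) (by linarith)
    have h6 : ‖vF q * q ^ (p.1 + 1)‖ ≤ 0.8 := by nlinarith
    have := Mc_pos
    have h7 : ‖z‖ ^ (p.1 + 1) ≤ (1 / 8) ^ p.1 := by
      calc ‖z‖ ^ (p.1 + 1) ≤ (1 / 8) ^ (p.1 + 1) := by gcongr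
        _ ≤ (1 / 8) ^ p.1 := by rw [pow_succ]; nlinarith [pow_pos (show (0:ℝ) < 1 / 8 by norm_num) p.1]
    gcongr
  have e1 : ∑' m : ℕ, PAterm q (m + 1) = 1 / (1 - q) * GG q * ∑' m : ℕ, ∑' j : ℕ, z ^ (m + 1) * (cc q j * (vF q * q ^ (m + 1)) ^ j) := by
    rw [← tsum_mul_left]
    congr 1; ext m
    rw [PAterm_eq hq m, tsum_mul_left]; rfl
  have e2 : ∑' m : ℕ, ∑' j : ℕ, z ^ (m + 1) * (cc q j * (vF q * q ^ (m + 1)) ^ j) = -q ^ 2 * T1 q := by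
    rw [Summable.tsum_comm (f := fun j m => z ^ (m + 1) * (cc q j * (vF q * q ^ (m + 1)) ^ j)) hS.prod_symm]
    unfold T1; rw [← tsum_mul_left]
    congr 1; ext j
    have hzj : ‖z * q ^ j‖ < 1 := by
      rw [norm_mul, norm_pow]
      have h5 : ‖q‖ ^ j ≤ 1 := pow_le_one₀ (norm_nonneg _) (by linarith)
      nlinarith [norm_nonneg z, pow_nonneg (norm_nonneg q) j]
    have hg := tsum_geometric_of_norm_lt_one hzj
    have e3 : (fun m : ℕ => z ^ (m + 1) * (cc q j * (vF q * q ^ (m + 1)) ^ j)) =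
        fun m : ℕ => cc q j * vF q ^ j * (z * q ^ j) * (z * q ^ j) ^ m := by
      ext m; rw [mul_pow, mul_pow, ← pow_mul, ← pow_mul]; ring
    rw [e3, tsum_mul_left, hg]
    have h6 := one_sub_ne hzj
    have hzs : z * (1 - 2 * q) = -q ^ 2 := by rw [hz, div_mul_cancel₀ _ hs]
    have e4 : 1 - z * q ^ j = (1 - 2 * q + q ^ (j + 2)) / (1 - 2 * q) := by
      rw [eq_div_iff hs]; linear_combination -(q ^ j) * hzs
    have h7 : 1 - 2 * q + q ^ (j + 2) ≠ 0 := by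
      intro h; apply h6; rw [e4, h, zero_div]
    rw [e4, inv_div]
    have e5 : cc q j * vF q ^ j * (z * q ^ j) * ((1 - 2 * q) / (1 - 2 * q + q ^ (j + 2))) =
      cc q j * vF q ^ j * q ^ j * (z * (1 - 2 * q)) / (1 - 2 * q + q ^ (j + 2)) := by ring
    rw [e5, hzs, mul_pow]; ring
  unfold PAseries FF
  rw [e1, e2]
  unfold CF Wf
  field_simp
end basic


/-! ### analytic estimates near `q = 1/2` -/

def bj (j : ℕ) : ℝ := (1 / 2) ^ (j + 2)

lemma bj_pos (j : ℕ) : 0 < bj j := by unfold bj; positivity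

lemma re_s_nonneg {q : ℂ} (hq : ‖q‖ ≤ 1 / 2) : 0 ≤ (1 - 2 * q).re := by
  have := (abs_le.mp (Complex.abs_re_le_norm q)).2
  simp; linarith

lemma norm_s_le {q : ℂ} (hq : ‖q‖ ≤ 1 / 2) : ‖1 - 2 * q‖ ≤ 2 := by
  have := norm_sub_le 1 (2 * q)
  have e : ‖2 * q‖ = 2 * ‖q‖ := by rw [norm_mul]; simp
  rw [norm_one, e] at this; linarith

lemma max_le_norm_add {s : ℂ} (hs : 0 ≤ s.re) {b : ℝ} (hb : 0 < b) : max ‖s‖ b ≤ ‖s + b‖ := by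
  apply max_le
  · rw [Complex.norm_def, Complex.norm_def]
    apply Real.sqrt_le_sqrt
    simp only [Complex.normSq_apply, Complex.add_re, Complex.add_im, Complex.ofReal_re, Complex.ofReal_im]
    nlinarith
  · have := (abs_le.mp (Complex.abs_re_le_norm (s + b))).2
    simp at this; linarith

lemma pow_sub_one_le {w : ℂ} (hw : ‖w‖ ≤ 1) (N : ℕ) : ‖w ^ N - 1‖ ≤ N * ‖w - 1‖ := by
  induction N with
  | zero => simp
  | succ N ih =>
    have e : w ^ (N + 1) - 1 = w * (w ^ N - 1) + (w - 1) := by ring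
    rw [e]
    refine (norm_add_le _ _).trans ?_
    rw [norm_mul]; push_cast
    nlinarith [norm_nonneg (w ^ N - 1), norm_nonneg (w - 1)]

lemma q_pow_sub {q : ℂ} (hq : ‖q‖ ≤ 1 / 2) (j : ℕ) :
    ‖q ^ (j + 2) - (bj j : ℂ)‖ ≤ (j + 2) * bj j * ‖1 - 2 * q‖ := by
  have h2 : ‖2 * q‖ ≤ 1 := by rw [norm_mul]; simp; linarith
  have h := pow_sub_one_le h2 (j + 2)
  have e : q ^ (j + 2) - (bj j : ℂ) = (bj j : ℂ) * ((2 * q) ^ (j + 2) - 1) := by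
    unfold bj; push_cast; rw [mul_pow]
    have : (1 / 2 : ℂ) ^ (j + 2) * 2 ^ (j + 2) = 1 := by rw [← mul_pow]; norm_num
    linear_combination -q ^ (j + 2) * this
  rw [e, norm_mul, Complex.norm_real, Real.norm_of_nonneg (bj_pos j).le, norm_sub_rev 1]
  push_cast at h
  calc _ ≤ bj j * ((j + 2) * ‖2 * q - 1‖) := by have := bj_pos j; gcongr
    _ = _ := by ring

lemma n_two_pow (j : ℕ) : ((j : ℝ) + 3) * (1 / 2) ^ (j + 2) ≤ 3 / 4 := by
  induction j with
  | zero => norm_num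
  | succ j ih =>
    push_cast; rw [pow_succ]
    have : 0 < (1 / 2 : ℝ) ^ (j + 2) := by positivity
    nlinarith [mul_nonneg (Nat.cast_nonneg (α := ℝ) j) this.le]

lemma lower_bd {q : ℂ} (hq : ‖q‖ ≤ 1 / 2) (j : ℕ) :
    1 / 8 * max ‖1 - 2 * q‖ (bj j) ≤ ‖1 - 2 * q + q ^ (j + 2)‖ := by
  have hs2 := norm_s_le hq
  have hre := re_s_nonneg hq
  have hb := bj_pos j
  rcases j with _ | j
  · have e : 1 - 2 * q + q ^ (0 + 2) = (1 - q) ^ 2 := by ring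
    rw [e, norm_pow]
    have h1 := norm_one_sub_ge q
    have h2 : 1 / 2 ≤ ‖1 - q‖ := by linarith
    have h3 : max ‖1 - 2 * q‖ (bj 0) ≤ 2 := max_le hs2 (by unfold bj; norm_num)
    nlinarith
  · set N := j + 1 + 2
    have hqN : ‖q ^ N‖ ≤ bj (j + 1) := by
      rw [norm_pow]; unfold bj; gcongr
    rcases le_or_gt (2 * bj (j + 1)) ‖1 - 2 * q‖ with h | h
    · rw [max_eq_left (by linarith)]
      have := norm_sub_norm_le (1 - 2 * q) (-q ^ N)
      rw [sub_neg_eq_add, norm_neg] at this; linarith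
    · have h1 := q_pow_sub hq (j + 1)
      have h2 : ((j + 1 : ℕ) + 2 : ℝ) * bj (j + 1) * ‖1 - 2 * q‖ ≤ 3 / 4 * bj (j + 1) := by
        have h3 := n_two_pow j
        have e : bj (j + 1) = (1 / 2) ^ (j + 2) * (1 / 2) := by unfold bj; rw [← pow_succ]
        push_cast
        have h4 : ((j : ℝ) + 1 + 2) * ‖1 - 2 * q‖ ≤ 3 / 4 := by
          have : ‖1 - 2 * q‖ ≤ (1 / 2) ^ (j + 2) := by rw [e] at h; linarith
          calc _ ≤ ((j : ℝ) + 1 + 2) * (1 / 2) ^ (j + 2) := by gcongr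
            _ = ((j : ℝ) + 3) * (1 / 2) ^ (j + 2) := by ring
            _ ≤ _ := h3
        nlinarith
      have h5 := (abs_le.mp (Complex.abs_re_le_norm (q ^ N - (bj (j + 1) : ℂ)))).1
      have h6 := (abs_le.mp (Complex.abs_re_le_norm (1 - 2 * q + q ^ N))).2
      have h7 : max ‖1 - 2 * q‖ (bj (j + 1)) ≤ 2 * bj (j + 1) := max_le h.le (by linarith)
      rw [Complex.add_re] at h6
      rw [Complex.sub_re, Complex.ofReal_re] at h5
      linarith

lemma lip_half (f : ℂ → ℂ) (M : ℝ) (hf : DifferentiableOn ℂ f (Metric.ball 0 0.51))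
    (hM : ∀ q : ℂ, ‖q‖ ≤ 0.505 → ‖f q‖ ≤ M) (q : ℂ) (hq : ‖q‖ ≤ 1 / 2) :
    ‖f q - f (1 / 2)‖ ≤ 100 * M * ‖1 - 2 * q‖ := by
  have hd : ∀ x ∈ Metric.closedBall (0 : ℂ) (1 / 2), DifferentiableAt ℂ f x := by
    intro x hx
    apply hf.differentiableAt
    apply Metric.isOpen_ball.mem_nhds
    rw [mem_closedBall_zero_iff] at hx
    rw [mem_ball_zero_iff]; norm_num at *; linarith
  have hb : ∀ x ∈ Metric.closedBall (0 : ℂ) (1 / 2), ‖deriv f x‖ ≤ M / 0.005 := by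
    intro x hx
    rw [mem_closedBall_zero_iff] at hx
    have hsub : ∀ y ∈ Metric.closedBall x 0.005, ‖y‖ ≤ 0.505 := by
      intro y hy
      rw [mem_closedBall_iff_norm] at hy
      have := norm_le_norm_add_norm_sub' y x
      norm_num at *; linarith
    apply Complex.norm_deriv_le_of_forall_mem_sphere_norm_le (by norm_num)
    · apply DifferentiableOn.diffContOnCl
      rw [closure_ball _ (by norm_num)]
      apply hf.mono
      intro y hy
      have := hsub y hy
      rw [mem_ball_zero_iff]; norm_num at *; linarith
    · intro z hz
      exact hM z (hsub z (Metric.sphere_subset_closedBall hz))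
  have := (convex_closedBall (0 : ℂ) (1 / 2)).norm_image_sub_le_of_norm_deriv_le hd hb
    (x := 1 / 2) (y := q) (by simp) (by simpa using hq)
  refine this.trans (le_of_eq ?_)
  have e : ‖1 - 2 * q‖ = 2 * ‖q - 1 / 2‖ := by
    rw [show 1 - 2 * q = -2 * (q - 1 / 2) by ring, norm_mul]; simp
  rw [e]; norm_num; ring

lemma ball_le {q : ℂ} (hq : q ∈ Metric.ball (0 : ℂ) 0.51) : ‖q‖ ≤ 0.51 := by
  rw [mem_ball_zero_iff] at hq; exact hq.le

lemma one_sub_ne51 {q : ℂ} (hq : ‖q‖ ≤ 0.51) : 1 - q ≠ 0 := one_sub_ne (by norm_num at *; linarith)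

lemma diff_vF : DifferentiableOn ℂ vF (Metric.ball 0 0.51) := by
  intro q hq
  have := one_sub_ne51 (ball_le hq)
  apply DifferentiableAt.differentiableWithinAt
  unfold vF
  fun_prop (disch := assumption)

lemma diff_uF : DifferentiableOn ℂ uF (Metric.ball 0 0.51) := by
  intro q hq
  have := one_sub_ne51 (ball_le hq)
  apply DifferentiableAt.differentiableWithinAt
  unfold uF
  fun_prop (disch := assumption)

lemma diff_aF : DifferentiableOn ℂ aF (Metric.ball 0 0.51) := by
  intro q hq
  have := quad_ne (ball_le hq)
  apply DifferentiableAt.differentiableWithinAt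
  unfold aF
  fun_prop (disch := assumption)

lemma diff_cc (j : ℕ) : DifferentiableOn ℂ (fun q => cc q j) (Metric.ball 0 0.51) := by
  induction j with
  | zero => simp only [cc_zero]; exact differentiableOn_const _
  | succ j ih =>
    simp only [cc_succ]
    apply ih.mul
    apply DifferentiableOn.div
    · exact (differentiableOn_const _).sub (diff_aF.mul (differentiableOn_id.pow j))
    · exact (differentiableOn_const _).sub (differentiableOn_id.pow _)
    · intro q hq
      have := ball_le hq
      exact one_sub_pow_ne (by norm_num at *; linarith) j

lemma diff_vq : DifferentiableOn ℂ (fun q => vF q * q) (Metric.ball 0 0.51) :=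
  diff_vF.mul differentiableOn_id

lemma diff_hh : DifferentiableOn ℂ (fun q => hh q (vF q * q)) (Metric.ball 0 0.51) := by
  unfold hh
  refine differentiableOn_tsum_of_summable_norm (u := fun j : ℕ => Mc * 0.8 ^ j)
    ((summable_geometric_of_lt_one (by norm_num) (by norm_num)).mul_left Mc) ?_ Metric.isOpen_ball ?_
  · intro j; exact (diff_cc j).mul (diff_vq.pow j)
  · intro j q hq
    have h1 := cc_bound (ball_le hq) j
    have h2 := vq_51 (ball_le hq)
    rw [norm_mul, norm_pow]; have := Mc_pos; gcongr

lemma diff_GG : DifferentiableOn ℂ GG (Metric.ball 0 0.51) := by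
  unfold GG
  apply DifferentiableOn.div (differentiableOn_const _)
  · exact ((differentiableOn_const _).sub (diff_uF.mul differentiableOn_id)).mul diff_hh
  · intro q hq
    exact mul_ne_zero (one_sub_ne (uq_51 (ball_le hq))) (hh_ne (ball_le hq))

lemma diff_Wf : DifferentiableOn ℂ Wf (Metric.ball 0 0.51) := by
  unfold Wf
  refine DifferentiableOn.mul ?_ diff_GG
  fun_prop

def CN (q : ℂ) : ℂ := 2 * q * (3 - 10 * q + 9 * q ^ 2 - q ^ 3) / (1 - q)

lemma diff_CN : DifferentiableOn ℂ CN (Metric.ball 0 0.51) := by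
  intro q hq
  have := one_sub_ne51 (ball_le hq)
  apply DifferentiableAt.differentiableWithinAt
  unfold CN
  fun_prop (disch := assumption)

lemma bdd_of_diff (f : ℂ → ℂ) (hf : DifferentiableOn ℂ f (Metric.ball 0 0.51)) :
    ∃ M : ℝ, 0 ≤ M ∧ ∀ q : ℂ, ‖q‖ ≤ 0.505 → ‖f q‖ ≤ M := by
  have hc : ContinuousOn f (Metric.closedBall 0 0.505) := by
    apply hf.continuousOn.mono
    exact Metric.closedBall_subset_ball (by norm_num)
  obtain ⟨M, hM⟩ := (isCompact_closedBall (0 : ℂ) 0.505).exists_bound_of_continuousOn hc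
  refine ⟨M, ?_, fun q hq => hM q (by simpa using hq)⟩
  exact (norm_nonneg _).trans (hM 0 (by simp; norm_num))

lemma s_ne {q : ℂ} (hq : ‖q‖ < 1 / 2) : 1 - 2 * q ≠ 0 :=
  one_sub_ne (by rw [norm_mul]; simp; linarith)

lemma den_ne {q : ℂ} (hq : ‖q‖ ≤ 1 / 2) (j : ℕ) : 1 - 2 * q + q ^ (j + 2) ≠ 0 := by
  rw [← norm_pos_iff]
  refine lt_of_lt_of_le ?_ (lower_bd hq j)
  have : 0 < max ‖1 - 2 * q‖ (bj j) := lt_of_lt_of_le (bj_pos j) (le_max_right _ _)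
  positivity

lemma le51 {q : ℂ} (hq : ‖q‖ ≤ 1 / 2) : ‖q‖ ≤ 0.51 := hq.trans (by norm_num)

lemma sT1_term {q : ℂ} (hq : ‖q‖ ≤ 1 / 2) (j : ℕ) :
    ‖(1 - 2 * q) * (cc q j * (vF q * q) ^ j / (1 - 2 * q + q ^ (j + 2)))‖ ≤ 8 * Mc * (3 / 4) ^ j := by
  have h1 := cc_bound (le51 hq) j
  have h2 := vq_half hq
  have h3 := (mul_le_mul_of_nonneg_left (le_max_left ‖1 - 2 * q‖ (bj j)) (by norm_num : (0:ℝ) ≤ 1 / 8)).trans (lower_bd hq j)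
  have h4 := norm_pos_iff.mpr (den_ne hq j)
  have := Mc_pos
  rw [norm_mul, norm_div, norm_mul, norm_pow, ← mul_div_assoc, div_le_iff₀ h4]
  calc _ ≤ ‖1 - 2 * q‖ * (Mc * (3 / 4) ^ j) := by gcongr
    _ ≤ (8 * ‖1 - 2 * q + q ^ (j + 2)‖) * (Mc * (3 / 4) ^ j) := by gcongr; linarith
    _ = _ := by ring

lemma diff_T1 : DifferentiableOn ℂ T1 (Metric.ball 0 (1 / 2)) := by
  have h : DifferentiableOn ℂ (fun q => ∑' j : ℕ, (1 - 2 * q) * (cc q j * (vF q * q) ^ j / (1 - 2 * q + q ^ (j + 2))))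
      (Metric.ball 0 (1 / 2)) := by
    refine differentiableOn_tsum_of_summable_norm (u := fun j : ℕ => 8 * Mc * (3 / 4) ^ j)
      ((summable_geometric_of_lt_one (by norm_num) (by norm_num)).mul_left _) ?_ Metric.isOpen_ball ?_
    · intro j
      have hsub : Metric.ball (0 : ℂ) (1 / 2) ⊆ Metric.ball 0 0.51 := Metric.ball_subset_ball (by norm_num)
      refine DifferentiableOn.mul (by fun_prop) (DifferentiableOn.div
        (((diff_cc j).mono hsub).mul ((diff_vq.mono hsub).pow j)) (by fun_prop) ?_)
      intro q hq
      rw [mem_ball_zero_iff] at hq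
      exact den_ne hq.le j
    · intro j q hq
      rw [mem_ball_zero_iff] at hq
      exact sT1_term hq.le j
  have h2 : DifferentiableOn ℂ (fun q : ℂ => (1 - 2 * q)⁻¹) (Metric.ball 0 (1 / 2)) := by
    apply DifferentiableOn.inv (by fun_prop)
    intro q hq
    rw [mem_ball_zero_iff] at hq; exact s_ne hq
  refine (h2.mul h).congr ?_
  intro q hq
  rw [mem_ball_zero_iff] at hq
  simp only [tsum_mul_left, Pi.mul_apply]
  rw [← mul_assoc, inv_mul_cancel₀ (s_ne hq), one_mul]; rfl

lemma diff_FF : DifferentiableOn ℂ FF (Metric.ball 0 (1 / 2)) := by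
  have hsub : Metric.ball (0 : ℂ) (1 / 2) ⊆ Metric.ball 0 0.51 := Metric.ball_subset_ball (by norm_num)
  unfold FF
  apply DifferentiableOn.add
  · apply DifferentiableOn.div ((diff_Wf.mono hsub).mul diff_T1) (by fun_prop)
    intro q hq
    rw [mem_ball_zero_iff] at hq; exact pow_ne_zero _ (s_ne hq)
  · unfold CF
    apply DifferentiableOn.div (by fun_prop) (by fun_prop)
    intro q hq
    have h1 := one_sub_ne51 (ball_le (hsub hq))
    rw [mem_ball_zero_iff] at hq; exact mul_ne_zero h1 (pow_ne_zero _ (s_ne hq))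


def Lt (x : ℝ) (j : ℕ) : ℝ := (j + 1) * (3 / 4) ^ j * (x / max x (bj j))
def Lsum (x : ℝ) : ℝ := ∑' j, Lt x j

lemma max_bj_pos (x : ℝ) (j : ℕ) : 0 < max x (bj j) := lt_of_lt_of_le (bj_pos j) (le_max_right _ _)

lemma Lt_nonneg {x : ℝ} (hx : 0 ≤ x) (j : ℕ) : 0 ≤ Lt x j := by
  unfold Lt; have := max_bj_pos x j; positivity

lemma Lt_le {x : ℝ} (j : ℕ) : Lt x j ≤ (j + 1) * (3 / 4) ^ j := by
  unfold Lt
  have : x / max x (bj j) ≤ 1 := by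
    rw [div_le_one (max_bj_pos x j)]; exact le_max_left _ _
  have h : (0 : ℝ) ≤ (j + 1) * (3 / 4) ^ j := by positivity
  nlinarith

lemma summable_j34 : Summable (fun j : ℕ => ((j : ℝ) + 1) * (3 / 4) ^ j) := by
  have h1 := summable_pow_mul_geometric_of_norm_lt_one 1 (r := (3 / 4 : ℝ)) (by norm_num)
  have h2 := summable_geometric_of_lt_one (r := (3 / 4 : ℝ)) (by norm_num) (by norm_num)
  refine (h1.add h2).congr fun j => ?_
  simp; ring

lemma Lt_summable {x : ℝ} (hx : 0 ≤ x) : Summable (Lt x) :=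
  Summable.of_nonneg_of_le (Lt_nonneg hx) Lt_le summable_j34

lemma Lsum_nonneg {x : ℝ} (hx : 0 ≤ x) : 0 ≤ Lsum x := tsum_nonneg (Lt_nonneg hx)

lemma le_Lsum {x : ℝ} (hx : 0 ≤ x) (hx2 : x ≤ 2) : x ≤ 2 * Lsum x := by
  have h : Lt x 0 ≤ Lsum x := (Lt_summable hx).le_tsum 0 (fun j _ => Lt_nonneg hx j)
  have h2 : x / 2 ≤ Lt x 0 := by
    unfold Lt bj
    simp only [Nat.cast_zero, zero_add, pow_zero, mul_one, one_mul]
    have : max x ((1 / 2) ^ 2) ≤ 2 := max_le hx2 (by norm_num)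
    gcongr
  linarith

lemma pow_sub_pow_le {x y : ℂ} {r : ℝ} (hr : 0 ≤ r) (hx : ‖x‖ ≤ r) (hy : ‖y‖ ≤ r) (j : ℕ) :
    r * ‖x ^ j - y ^ j‖ ≤ j * r ^ j * ‖x - y‖ := by
  induction j with
  | zero => simp
  | succ j ih =>
    have e : x ^ (j + 1) - y ^ (j + 1) = x * (x ^ j - y ^ j) + (x - y) * y ^ j := by ring
    rw [e]
    calc r * ‖x * (x ^ j - y ^ j) + (x - y) * y ^ j‖
        ≤ r * (‖x‖ * ‖x ^ j - y ^ j‖ + ‖x - y‖ * ‖y‖ ^ j) := by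
          gcongr; refine (norm_add_le _ _).trans ?_; rw [norm_mul, norm_mul, norm_pow]
      _ ≤ r * (r * ‖x ^ j - y ^ j‖ + ‖x - y‖ * r ^ j) := by gcongr
      _ = r * (r * ‖x ^ j - y ^ j‖) + ‖x - y‖ * (r ^ j * r) := by ring
      _ ≤ r * (j * r ^ j * ‖x - y‖) + ‖x - y‖ * (r ^ j * r) := by gcongr
      _ = _ := by push_cast; ring

/-- frozen sum -/
def Tt (s : ℂ) : ℂ := ∑' j : ℕ, cc (1 / 2) j * (3 / 4) ^ j / (s + (bj j : ℂ))

lemma half_le : ‖(1 / 2 : ℂ)‖ ≤ 1 / 2 := by norm_num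

lemma vq_at_half : vF (1 / 2) * (1 / 2) = 3 / 4 := by unfold vF; norm_num

lemma cc_half_bound (j : ℕ) : ‖cc (1 / 2) j‖ ≤ Mc := cc_bound (le51 half_le) j

lemma Tt_term {s : ℂ} (hs : 0 ≤ s.re) (j : ℕ) :
    ‖s‖ * ‖cc (1 / 2) j * (3 / 4) ^ j / (s + (bj j : ℂ))‖ ≤ Mc * Lt ‖s‖ j := by
  have h1 := max_le_norm_add hs (bj_pos j)
  have h2 := cc_half_bound j
  have h3 := max_bj_pos ‖s‖ j
  have h4 := Mc_pos
  rw [norm_div, norm_mul, norm_pow]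
  have e : ‖(3 / 4 : ℂ)‖ = 3 / 4 := by norm_num
  rw [e]
  unfold Lt
  calc _ ≤ ‖s‖ * (Mc * (3 / 4) ^ j / max ‖s‖ (bj j)) := by gcongr
    _ = Mc * (1 * (3 / 4) ^ j * (‖s‖ / max ‖s‖ (bj j))) := by ring
    _ ≤ _ := by gcongr; have : (0 : ℝ) ≤ j := Nat.cast_nonneg j
                linarith

lemma Tt_summable {s : ℂ} (hs : 0 ≤ s.re) (hs0 : s ≠ 0) :
    Summable (fun j : ℕ => cc (1 / 2) j * (3 / 4) ^ j / (s + (bj j : ℂ))) := by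
  refine Summable.of_norm_bounded (((Lt_summable (norm_nonneg s)).mul_left Mc).mul_left ‖s‖⁻¹) (fun j => ?_)
  rw [inv_mul_eq_div, le_div_iff₀ (norm_pos_iff.mpr hs0), mul_comm]
  exact Tt_term hs j

lemma Tt_bound {s : ℂ} (hs : 0 ≤ s.re) : ‖s * Tt s‖ ≤ Mc * Lsum ‖s‖ := by
  unfold Tt
  rw [← tsum_mul_left]
  refine tsum_of_norm_bounded ((Lt_summable (norm_nonneg s)).hasSum.mul_left Mc) (fun j => ?_)
  rw [norm_mul]; exact Tt_term hs j

lemma T1_summable {q : ℂ} (hq : ‖q‖ < 1 / 2) :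
    Summable (fun j : ℕ => cc q j * (vF q * q) ^ j / (1 - 2 * q + q ^ (j + 2))) := by
  rw [← summable_mul_left_iff (s_ne hq)]
  exact Summable.of_norm_bounded ((summable_geometric_of_lt_one (by norm_num) (by norm_num)).mul_left _)
    (fun j => sT1_term hq.le j)

lemma T1_sub_term {q : ℂ} (hq : ‖q‖ < 1 / 2) (j : ℕ) :
    ‖cc q j * (vF q * q) ^ j / (1 - 2 * q + q ^ (j + 2)) -
      cc (1 / 2) j * (3 / 4) ^ j / (1 - 2 * q + (bj j : ℂ))‖ ≤ 900 * Mc * Lt ‖1 - 2 * q‖ j := by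
  have hd := lower_bd hq.le j
  have hd0 := max_le_norm_add (re_s_nonneg hq.le) (bj_pos j)
  have hM := max_bj_pos ‖1 - 2 * q‖ j
  have hbM : bj j ≤ max ‖1 - 2 * q‖ (bj j) := le_max_right _ _
  have hb := bj_pos j
  have hDne := den_ne hq.le j
  have hD0ne : 1 - 2 * q + (bj j : ℂ) ≠ 0 := by
    rw [← norm_pos_iff]; linarith
  have hMc := Mc_pos
  have hA := lip_half (fun q => cc q j) Mc (diff_cc j) (fun q hq => cc_bound (hq.trans (by norm_num)) j) q hq.le
  have hY := lip_half (fun q => vF q * q) 0.8 diff_vq (fun q hq => vq_51 (hq.trans (by norm_num))) q hq.le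
  rw [vq_at_half] at hY
  have hy := vq_half hq.le
  have hyj := pow_sub_pow_le (r := 3 / 4) (by norm_num) hy (show ‖(3 / 4 : ℂ)‖ ≤ 3 / 4 by norm_num) j
  have hqN := q_pow_sub hq.le j
  have hc := cc_half_bound j
  unfold Lt
  have e : cc q j * (vF q * q) ^ j / (1 - 2 * q + q ^ (j + 2)) -
      cc (1 / 2) j * (3 / 4) ^ j / (1 - 2 * q + (bj j : ℂ)) =
      ((cc q j - cc (1 / 2) j) * (vF q * q) ^ j + cc (1 / 2) j * ((vF q * q) ^ j - (3 / 4) ^ j)) / (1 - 2 * q + q ^ (j + 2))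
      - cc (1 / 2) j * (3 / 4) ^ j * (q ^ (j + 2) - (bj j : ℂ)) / ((1 - 2 * q + q ^ (j + 2)) * (1 - 2 * q + (bj j : ℂ))) := by
    have : q ^ (j + 2) - (bj j : ℂ) = (1 - 2 * q + q ^ (j + 2)) - (1 - 2 * q + (bj j : ℂ)) := by ring
    rw [this]
    generalize 1 - 2 * q + q ^ (j + 2) = D at *
    generalize 1 - 2 * q + (bj j : ℂ) = D0 at *
    field_simp
    ring
  rw [e]
  generalize 1 - 2 * q + q ^ (j + 2) = D at *
  generalize 1 - 2 * q + (bj j : ℂ) = D0 at *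
  generalize ‖1 - 2 * q‖ = x at *
  generalize max x (bj j) = m at *
  generalize vF q * q = y at *
  generalize q ^ (j + 2) - (bj j : ℂ) = w at *
  have hx0 : 0 ≤ x := by
    have := (norm_nonneg _).trans hY; nlinarith
  have hDpos : 0 < ‖D‖ := norm_pos_iff.mpr hDne
  have hD0pos : 0 < ‖D0‖ := norm_pos_iff.mpr hD0ne
  have hj : (0 : ℝ) ≤ j := Nat.cast_nonneg j
  have hp : (0 : ℝ) < (3 / 4) ^ j := by positivity
  have n1 : ‖(cc q j - cc (1 / 2) j) * y ^ j + cc (1 / 2) j * (y ^ j - (3 / 4) ^ j)‖ ≤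
      107 * Mc * ((j + 1) * (3 / 4) ^ j) * x := by
    have a1 : ‖(cc q j - cc (1 / 2) j) * y ^ j‖ ≤ (100 * Mc * x) * (3 / 4) ^ j := by
      rw [norm_mul, norm_pow]; gcongr
    have a2 : ‖y ^ j - (3 / 4) ^ j‖ ≤ 107 * (j * (3 / 4) ^ j) * x := by
      have : ↑j * (3 / 4) ^ j * ‖y - 3 / 4‖ ≤ ↑j * (3 / 4) ^ j * (100 * 0.8 * x) := by gcongr
      nlinarith [mul_nonneg (mul_nonneg hj hp.le) hx0]
    have a3 : ‖cc (1 / 2) j * (y ^ j - (3 / 4) ^ j)‖ ≤ Mc * (107 * (j * (3 / 4) ^ j) * x) := by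
      rw [norm_mul]; gcongr
    refine (norm_add_le _ _).trans ?_
    have a4 : 0 ≤ Mc * (x * (3 / 4) ^ j) := by positivity
    nlinarith
  have n2 : ‖cc (1 / 2) j * (3 / 4) ^ j * w‖ ≤ Mc * (3 / 4) ^ j * ((j + 2) * bj j * x) := by
    rw [norm_mul, norm_mul, norm_pow]
    have : ‖(3 / 4 : ℂ)‖ = 3 / 4 := by norm_num
    rw [this]; gcongr
  refine (norm_sub_le _ _).trans ?_
  rw [norm_div, norm_div, norm_mul D D0]
  have b1 : ‖(cc q j - cc (1 / 2) j) * y ^ j + cc (1 / 2) j * (y ^ j - (3 / 4) ^ j)‖ / ‖D‖ ≤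
      107 * Mc * ((j + 1) * (3 / 4) ^ j) * x / (1 / 8 * m) := by gcongr
  have b2 : ‖cc (1 / 2) j * (3 / 4) ^ j * w‖ / (‖D‖ * ‖D0‖) ≤
      Mc * (3 / 4) ^ j * ((j + 2) * m * x) / (1 / 8 * m * m) := by
    have : Mc * (3 / 4) ^ j * ((j + 2) * bj j * x) ≤ Mc * (3 / 4) ^ j * ((j + 2) * m * x) := by gcongr
    have := n2.trans this
    gcongr
  have e1 : 107 * Mc * ((j + 1) * (3 / 4) ^ j) * x / (1 / 8 * m) = 856 * (Mc * ((j + 1) * (3 / 4) ^ j * (x / m))) := by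
    field_simp; ring
  have e2 : Mc * (3 / 4) ^ j * ((j + 2) * m * x) / (1 / 8 * m * m) = 8 * (Mc * ((j + 2) * (3 / 4) ^ j * (x / m))) := by
    field_simp
  have b3 : 8 * (Mc * (((j : ℝ) + 2) * (3 / 4) ^ j * (x / m))) ≤ 8 * (Mc * ((2 * ((j : ℝ) + 1)) * (3 / 4) ^ j * (x / m))) := by
    gcongr; linarith
  have b4 : 0 ≤ Mc * (((j : ℝ) + 1) * (3 / 4) ^ j * (x / m)) := by positivity
  rw [e1] at b1; rw [e2] at b2
  nlinarith

lemma T1_sub {q : ℂ} (hq : ‖q‖ < 1 / 2) :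
    ‖T1 q - Tt (1 - 2 * q)‖ ≤ 900 * Mc * Lsum ‖1 - 2 * q‖ := by
  unfold T1 Tt
  rw [← (T1_summable hq).tsum_sub (Tt_summable (re_s_nonneg hq.le) (s_ne hq))]
  exact tsum_of_norm_bounded ((Lt_summable (norm_nonneg _)).hasSum.mul_left _) (T1_sub_term hq)

/-! ### the frozen sum -/

lemma cc_half_succ (j : ℕ) : cc (1 / 2) (j + 1) * (1 - (1 / 2) ^ (j + 1)) = cc (1 / 2) j * (1 - 1 / 3 * (1 / 2) ^ j) := by
  have h := one_sub_pow_ne (q := (1 / 2 : ℂ)) (by norm_num) j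
  have ha : aF (1 / 2) = 1 / 3 := by unfold aF; norm_num
  rw [cc_succ, ha, mul_assoc, div_mul_cancel₀ _ h]

lemma cc_half_diff (j : ℕ) : cc (1 / 2) (j + 1) - cc (1 / 2) j =
    (cc (1 / 2) (j + 1) * (1 / 2) - cc (1 / 2) j * (1 / 3)) * (1 / 2) ^ j := by
  have := cc_half_succ j
  rw [pow_succ] at this
  linear_combination this

lemma exists_cInf : ∃ cI : ℂ, Tendsto (cc (1 / 2)) atTop (𝓝 cI) ∧ ∀ j, ‖cc (1 / 2) j - cI‖ ≤ 2 * Mc * (1 / 2) ^ j := by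
  have hu : ∀ n, dist (cc (1 / 2) n) (cc (1 / 2) (n + 1)) ≤ Mc * (1 / 2) ^ n := by
    intro n
    rw [dist_comm, dist_eq_norm, cc_half_diff, norm_mul, norm_pow]
    have h1 := cc_half_bound n
    have h2 := cc_half_bound (n + 1)
    have h3 : ‖cc (1 / 2) (n + 1) * (1 / 2) - cc (1 / 2) n * (1 / 3)‖ ≤ Mc := by
      refine (norm_sub_le _ _).trans ?_
      rw [norm_mul, norm_mul]
      have : ‖(1 / 2 : ℂ)‖ = 1 / 2 := by norm_num
      have : ‖(1 / 3 : ℂ)‖ = 1 / 3 := by norm_num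
      rw [‹‖(1 / 2 : ℂ)‖ = 1 / 2›, this]
      have := Mc_pos
      linarith
    have : ‖(1 / 2 : ℂ)‖ = 1 / 2 := by norm_num
    rw [this]; gcongr
  have hc := cauchySeq_of_le_geometric (1 / 2) Mc (by norm_num) hu
  obtain ⟨cI, hcI⟩ := cauchySeq_tendsto_of_complete hc
  refine ⟨cI, hcI, fun j => ?_⟩
  have := dist_le_of_le_geometric_of_tendsto (1 / 2) Mc (by norm_num) hu hcI j
  rw [dist_eq_norm] at this
  refine this.trans (le_of_eq ?_); ring

def hhalf : ℂ := hh (1 / 2) (3 / 4)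

lemma hhalf_ne : hhalf ≠ 0 := by
  have := hh_ne (q := 1 / 2) (le51 half_le); rwa [vq_at_half] at this

lemma Wf_half : Wf (1 / 2) = 1 / (16 * hhalf) := by
  have := hhalf_ne
  unfold Wf GG uF
  rw [vq_at_half]
  change _ * (1 / (_ * hhalf)) = _
  norm_num
  field_simp
  norm_num

/-- the linear relation satisfied by the frozen series -/
lemma E_rel (cI : ℂ) (hcI : ∀ j, ‖cc (1 / 2) j - cI‖ ≤ 2 * Mc * (1 / 2) ^ j) :
    HasSum (fun j : ℕ => (cc (1 / 2) j - cI) * (3 / 2) ^ j) (2 * cI - hhalf) := by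
  have hS : Summable (fun j : ℕ => (cc (1 / 2) j - cI) * (3 / 2) ^ j) := by
    refine Summable.of_norm_bounded ((summable_geometric_of_lt_one (r := 3 / 4) (by norm_num) (by norm_num)).mul_left (2 * Mc)) (fun j => ?_)
    rw [norm_mul, norm_pow]
    have : ‖(3 / 2 : ℂ)‖ = 3 / 2 := by norm_num
    rw [this]
    calc _ ≤ 2 * Mc * (1 / 2) ^ j * (3 / 2) ^ j := by gcongr; exact hcI j
      _ = 2 * Mc * (3 / 4) ^ j := by rw [mul_assoc, ← mul_pow]; norm_num
  have hH : Summable (fun j : ℕ => cc (1 / 2) j * (3 / 4) ^ j) := hh_summable (le51 half_le) (by norm_num)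
  have hE := hS.hasSum
  set E := ∑' j : ℕ, (cc (1 / 2) j - cI) * (3 / 2) ^ j with hEdef
  have hh1 : HasSum (fun j : ℕ => cc (1 / 2) j * (3 / 4) ^ j) hhalf := hH.hasSum
  have hE1 : HasSum (fun j : ℕ => (cc (1 / 2) (j + 1) - cI) * (3 / 2) ^ (j + 1)) (E - (1 - cI)) := by
    have := (hasSum_nat_add_iff' 1).mpr hE
    simpa [cc_zero] using this
  have hh2 : HasSum (fun j : ℕ => cc (1 / 2) (j + 1) * (3 / 4) ^ (j + 1)) (hhalf - 1) := by
    have := (hasSum_nat_add_iff' 1).mpr hh1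
    simpa [cc_zero] using this
  have hL := (hE1.mul_left (2 / 3)).sub hE
  have hR := (hh2.mul_left (2 / 3)).sub (hh1.mul_left (1 / 3))
  have hfun : (fun j : ℕ => 2 / 3 * ((cc (1 / 2) (j + 1) - cI) * (3 / 2) ^ (j + 1)) - (cc (1 / 2) j - cI) * (3 / 2) ^ j) =
      fun j : ℕ => 2 / 3 * (cc (1 / 2) (j + 1) * (3 / 4) ^ (j + 1)) - 1 / 3 * (cc (1 / 2) j * (3 / 4) ^ j) := by
    ext j
    have h := cc_half_diff j
    have e : (3 / 4 : ℂ) ^ j = (1 / 2) ^ j * (3 / 2) ^ j := by rw [← mul_pow]; norm_num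
    rw [pow_succ, pow_succ, e]
    linear_combination (3 / 2 : ℂ) ^ j * h
  rw [hfun] at hL
  have := hL.unique hR
  have e : E = 2 * cI - hhalf := by linear_combination -3 * this
  rw [← e]; exact hE


def piF (j : ℕ) : ℝ := (1 - (1 / 3) * (1 / 2) ^ j) * (1 - (3 / 2) * (1 / 2) ^ j) / (1 - (1 / 2) * (1 / 2) ^ j) ^ 2

lemma PiProd_eq : PiProd = ∏' j : ℕ, piF j := by
  unfold PiProd piF
  simp only [zpow_neg, zpow_natCast, one_div, inv_pow]

lemma half_pow_le (j : ℕ) : (1 / 2 : ℝ) ^ j ≤ 1 := pow_le_one₀ (by norm_num) (by norm_num)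

lemma piF_sub (j : ℕ) : |piF j - 1| ≤ 5 * (1 / 2) ^ j := by
  have h0 : (0 : ℝ) < (1 / 2) ^ j := by positivity
  have h1 := half_pow_le j
  unfold piF
  generalize (1 / 2 : ℝ) ^ j = x at *
  have h2 : 1 / 2 ≤ 1 - 1 / 2 * x := by linarith
  have e : (1 - (1 / 3) * x) * (1 - (3 / 2) * x) / (1 - (1 / 2) * x) ^ 2 - 1 =
      (-5 / 6 * x + x ^ 2 / 4) / (1 - (1 / 2) * x) ^ 2 := by
    have : 1 - (1 / 2) * x ≠ 0 := by linarith
    rw [div_sub_one (pow_ne_zero 2 this)]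
    congr 1; ring
  have h3 : 1 / 4 ≤ (1 - 1 / 2 * x) ^ 2 := by nlinarith
  rw [e, abs_div, abs_of_pos (by positivity : 0 < (1 - 1 / 2 * x) ^ 2), div_le_iff₀ (by positivity)]
  have : |-5 / 6 * x + x ^ 2 / 4| ≤ 5 * x * (1 / 4) := by
    rw [abs_le]; constructor <;> nlinarith
  refine this.trans ?_
  gcongr

lemma piF_tendsto : Tendsto (fun n => ∏ j ∈ Finset.range n, piF j) atTop (𝓝 PiProd) := by
  have hs : Summable (fun j => ‖piF j - 1‖) := by
    refine Summable.of_nonneg_of_le (fun _ => norm_nonneg _) (fun j => piF_sub j)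
      ((summable_geometric_of_lt_one (by norm_num) (by norm_num)).mul_left 5)
  have hm : Multipliable piF := by
    have := multipliable_one_add_of_summable hs
    simpa using this
  rw [PiProd_eq]
  exact hm.hasProd.tendsto_prod_nat

lemma half_uF : uF (1 / 2) = 1 := by unfold uF; norm_num
lemma half_vF : vF (1 / 2) = 3 / 2 := by unfold vF; norm_num

lemma pi_partial (n : ℕ) : ((∏ j ∈ Finset.range (n + 1), piF j : ℝ) : ℂ) * hhalf =
    - cc (1 / 2) (n + 1) * hh (1 / 2) (3 / 2 * (1 / 2) ^ (n + 1)) := by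
  induction n with
  | zero =>
    have h := cc_half_succ 0
    rw [cc_zero] at h
    simp only [zero_add, Finset.prod_range_one, pow_one] at *
    have e1 : (3 / 2 * (1 / 2) : ℂ) = 3 / 4 := by norm_num
    rw [e1]
    change _ = _ * hhalf
    have e2 : piF 0 = -4/3 := by unfold piF; norm_num
    rw [e2]
    have e3 : cc (1 / 2) 1 = 4 / 3 := by
      norm_num at h; linear_combination 2 * h
    rw [e3]; push_cast; ring
  | succ n ih =>
    rw [Finset.prod_range_succ, Complex.ofReal_mul]
    have hst := hh_step (le51 half_le) n
    rw [half_uF, half_vF] at hst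
    have hc := cc_half_succ (n + 1)
    have hne : (1 - 1 / 2 * (1 / 2 : ℂ) ^ (n + 1)) ≠ 0 := by
      have := one_sub_pow_ne (q := (1 / 2 : ℂ)) (by norm_num) (n + 1)
      rwa [pow_succ'] at this
    have e : ((piF (n + 1) : ℝ) : ℂ) * (1 - 1 / 2 * (1 / 2 : ℂ) ^ (n + 1)) ^ 2 =
        (1 - (1 / 3) * (1 / 2) ^ (n + 1)) * (1 - (3 / 2) * (1 / 2) ^ (n + 1)) := by
      unfold piF; push_cast
      rw [div_mul_cancel₀ _ (pow_ne_zero 2 hne)]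
    rw [pow_succ' _ (n + 1)] at hc
    have e4 : (1 / 2 : ℂ) ^ (n + 2) = 1 / 2 * (1 / 2) ^ (n + 1) := pow_succ' _ _
    apply mul_right_cancel₀ (pow_ne_zero 2 hne)
    rw [show n + 1 + 1 = n + 2 by ring] at hc ⊢
    rw [e4] at hst ⊢
    clear e4
    generalize (1 / 2 : ℂ) ^ (n + 1) = x at *
    generalize hh (1 / 2) (3 / 2 * (1 / 2 * x)) = H2 at *
    generalize hh (1 / 2) (3 / 2 * x) = H1 at *
    generalize ((∏ j ∈ Finset.range (n + 1), piF j : ℝ) : ℂ) = P at *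
    generalize ((piF (n + 1) : ℝ) : ℂ) = p at *
    generalize cc (1 / 2) (n + 2) = c2 at *
    generalize cc (1 / 2) (n + 1) = c1 at *
    linear_combination hhalf * P * e + (1 - 1 / 3 * x) * (1 - 3 / 2 * x) * ih - c1 * (1 - 1 / 3 * x) * hst +
      H2 * (1 - 1 / 2 * x) * hc

lemma cI_eq (cI : ℂ) (hcI : Tendsto (cc (1 / 2)) atTop (𝓝 cI)) : cI = - (PiProd : ℂ) * hhalf := by
  have h1 : Tendsto (fun n : ℕ => ((∏ j ∈ Finset.range (n + 1), piF j : ℝ) : ℂ) * hhalf) atTop (𝓝 ((PiProd : ℂ) * hhalf)) := by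
    apply Tendsto.mul_const
    exact (Complex.continuous_ofReal.tendsto _).comp (piF_tendsto.comp (tendsto_add_atTop_nat 1))
  have hH : Tendsto (fun n : ℕ => hh (1 / 2) (3 / 2 * (1 / 2) ^ (n + 1))) atTop (𝓝 1) := by
    rw [tendsto_iff_norm_sub_tendsto_zero]
    have ht : Tendsto (fun m : ℕ => Mc * (0.8 * ‖(1 / 2 : ℂ)‖ ^ m) * 5) atTop (𝓝 (Mc * (0.8 * 0) * 5)) := by
      refine Tendsto.mul_const _ (Tendsto.const_mul _ (Tendsto.const_mul _ ?_))
      exact tendsto_pow_atTop_nhds_zero_of_lt_one (norm_nonneg _) (by norm_num)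
    rw [mul_zero, mul_zero, zero_mul] at ht
    refine squeeze_zero (fun _ => norm_nonneg _) (fun m => ?_) ht
    have hq := le51 half_le
    have h1 := hh_sub_one hq (vqm_lt hq m)
    have h2 := vqm_51 hq m
    have hlt := vqm_lt hq m
    rw [half_vF] at h1 h2 hlt
    have h3 : ‖(1 / 2 : ℂ)‖ ^ m ≤ 1 := pow_le_one₀ (norm_nonneg _) (by norm_num)
    have h6 : ‖3 / 2 * (1 / 2 : ℂ) ^ (m + 1)‖ ≤ 0.8 := h2.trans (by linarith)
    have h4 : (1 - ‖3 / 2 * (1 / 2 : ℂ) ^ (m + 1)‖)⁻¹ ≤ 5 := by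
      rw [inv_le_comm₀ (by linarith) (by norm_num)]; linarith
    have := Mc_pos
    have h5 : 0 ≤ (1 - ‖3 / 2 * (1 / 2 : ℂ) ^ (m + 1)‖)⁻¹ := by
      rw [inv_nonneg]; linarith
    calc _ ≤ _ := h1
      _ ≤ _ := by gcongr
  have h2 : Tendsto (fun n : ℕ => - cc (1 / 2) (n + 1) * hh (1 / 2) (3 / 2 * (1 / 2) ^ (n + 1))) atTop (𝓝 (-cI * 1)) :=
    ((hcI.comp (tendsto_add_atTop_nat 1)).neg).mul hH
  have h3 := tendsto_nhds_unique h1 (h2.congr fun n => (pi_partial n).symm)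
  linear_combination h3

/-- upper part -/
def Pup (s : ℂ) : ℂ := ∑' j : ℕ, (3 / 2 : ℂ) ^ j * ((bj j : ℂ) / (s + (bj j : ℂ)))

lemma sb_ne {s : ℂ} (hs : 0 ≤ s.re) {b : ℝ} (hb : 0 < b) : s + (b : ℂ) ≠ 0 := by
  rw [← norm_pos_iff]
  have := max_le_norm_add hs hb
  have := le_max_right ‖s‖ b
  linarith

lemma s_div_le {s : ℂ} (hs : 0 ≤ s.re) {b : ℝ} (hb : 0 < b) : ‖s / (s + (b : ℂ))‖ ≤ ‖s‖ / max ‖s‖ b := by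
  have := max_le_norm_add hs hb
  have h2 : 0 < max ‖s‖ b := lt_of_lt_of_le hb (le_max_right _ _)
  rw [norm_div]; gcongr

lemma Pup_summable {s : ℂ} (hs : 0 ≤ s.re) (hs0 : s ≠ 0) :
    Summable (fun j : ℕ => (3 / 2 : ℂ) ^ j * ((bj j : ℂ) / (s + (bj j : ℂ)))) := by
  refine Summable.of_norm_bounded ((summable_geometric_of_lt_one (r := 3 / 4) (by norm_num) (by norm_num)).mul_left (‖s‖⁻¹)) (fun j => ?_)
  have h1 := max_le_norm_add hs (bj_pos j)
  have h2 := le_max_left ‖s‖ (bj j)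
  have h3 := norm_pos_iff.mpr hs0
  rw [norm_mul, norm_div, norm_pow, Complex.norm_real, Real.norm_of_nonneg (bj_pos j).le]
  have : ‖(3 / 2 : ℂ)‖ = 3 / 2 := by norm_num
  rw [this]
  have hbj := bj_pos j
  calc _ ≤ (3 / 2) ^ j * (bj j / ‖s‖) := by gcongr; linarith
    _ = ‖s‖⁻¹ * ((3 / 2) ^ j * bj j) := by ring
    _ ≤ _ := by
      gcongr
      unfold bj
      rw [pow_add, ← mul_assoc, ← mul_pow]
      have : (0 : ℝ) ≤ (3 / 4) ^ j := by positivity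
      norm_num

lemma Bm_split {s : ℂ} (hs : 0 ≤ s.re) (hs0 : s ≠ 0) :
    ∃ e : ℂ, ‖e‖ ≤ 4 * ‖s‖ ∧ Bm s = 9 / 4 * (Pup s + 2 - e) := by
  set dn : ℕ → ℂ := fun n => (2 / 3 : ℂ) ^ (n + 1) * (s / (s + ((2 : ℝ) ^ ((n : ℤ) - 1) : ℝ))) with hdn
  have hdb : ∀ n, ‖dn n‖ ≤ 2 * ‖s‖ * (2 / 3 * (2 / 3) ^ n) := by
    intro n
    have hb : (1 / 2 : ℝ) ≤ 2 ^ ((n : ℤ) - 1) := by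
      rw [zpow_sub_one₀ (by norm_num), zpow_natCast]
      have : (1 : ℝ) ≤ 2 ^ n := one_le_pow₀ (by norm_num)
      norm_num; linarith
    have h1 := s_div_le hs (b := (2 : ℝ) ^ ((n : ℤ) - 1)) (by positivity)
    have h2 : ‖s‖ / max ‖s‖ ((2 : ℝ) ^ ((n : ℤ) - 1)) ≤ ‖s‖ / (1 / 2) := by
      gcongr; exact hb.trans (le_max_right _ _)
    rw [hdn]; simp only
    rw [norm_mul, norm_pow, pow_succ]
    have : ‖(2 / 3 : ℂ)‖ = 2 / 3 := by norm_num
    rw [this]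
    calc _ ≤ (2 / 3 : ℝ) ^ n * (2 / 3) * (‖s‖ / (1 / 2)) := by gcongr; exact h1.trans h2
      _ = _ := by ring
  have hgeo : HasSum (fun n : ℕ => 2 * ‖s‖ * (2 / 3 * (2 / 3 : ℝ) ^ n)) (2 * ‖s‖ * (2 / 3 * (1 - 2 / 3)⁻¹)) :=
    ((hasSum_geometric_of_lt_one (by norm_num) (by norm_num)).mul_left (2 / 3)).mul_left _
  have hsum : Summable dn := Summable.of_norm_bounded hgeo.summable hdb
  refine ⟨∑' n, dn n, ?_, ?_⟩
  · refine (tsum_of_norm_bounded hgeo hdb).trans (le_of_eq (by norm_num; ring))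
  · unfold Bm
    rw [← (Equiv.addRight (2 : ℤ)).tsum_eq]
    have hup : HasSum (fun n : ℕ => 9 / 4 * ((3 / 2 : ℂ) ^ n * ((bj n : ℂ) / (s + (bj n : ℂ))))) (9 / 4 * Pup s) :=
      (Pup_summable hs hs0).hasSum.mul_left (9 / 4)
    have hg0 : HasSum (fun n : ℕ => (2 / 3 : ℂ) ^ n) (1 - 2 / 3)⁻¹ :=
      hasSum_geometric_of_norm_lt_one (by norm_num : ‖(2 / 3 : ℂ)‖ < 1)
    have hg2 : HasSum (fun n : ℕ => (2 / 3 : ℂ) * (2 / 3) ^ n) (2 / 3 * (1 - 2 / 3)⁻¹) :=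
      hg0.mul_left (2 / 3)
    have hdn2 := (hg2.sub hsum.hasSum).mul_left (9 / 4)
    have hbd : ∀ n : ℕ, (2 : ℝ) ^ (-((n : ℤ) + 2)) = bj n := by
      intro n; unfold bj; rw [zpow_neg, one_div, inv_pow]; norm_cast
    set t : ℤ → ℂ := fun c : ℤ => (((3 : ℝ) ^ (c + 2) * (2 : ℝ) ^ (-(c + 2)) : ℝ) : ℂ) *
      ((((2 : ℝ) ^ (-(c + 2)) : ℝ) : ℂ) / (s + ((2 : ℝ) ^ (-(c + 2)) : ℝ))) with ht
    change ∑' c, t c = _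
    have t1 : (fun n : ℕ => t n) = fun n : ℕ => 9 / 4 * ((3 / 2 : ℂ) ^ n * ((bj n : ℂ) / (s + (bj n : ℂ)))) := by
      ext n
      simp only [ht]
      rw [three_two, hbd]
      have e : (3 / 2 : ℝ) ^ ((n : ℤ) + 2) = 9 / 4 * (3 / 2) ^ n := by
        rw [zpow_add₀ (by norm_num), zpow_natCast, mul_comm]; norm_num
      rw [e]; push_cast; ring
    have t2 : (fun n : ℕ => t (-((n : ℤ) + 1))) = fun n : ℕ => 9 / 4 * ((2 / 3 : ℂ) * (2 / 3) ^ n - dn n) := by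
      ext n
      simp only [ht, hdn]
      rw [three_two]
      have e : (3 / 2 : ℝ) ^ (-((n : ℤ) + 1) + 2) = 9 / 4 * (2 / 3) ^ (n + 1) := by
        rw [zpow_add₀ (by norm_num), zpow_neg, ← inv_zpow, mul_comm]
        norm_cast; norm_num
      have e2 : -(-((n : ℤ) + 1) + 2) = (n : ℤ) - 1 := by ring
      rw [e, e2]
      have hne := sb_ne hs (b := (2 : ℝ) ^ ((n : ℤ) - 1)) (by positivity)
      generalize (((2 : ℝ) ^ ((n : ℤ) - 1) : ℝ) : ℂ) = b at *
      have e3 : b / (s + b) = 1 - s / (s + b) := by field_simp; ring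
      rw [e3]; push_cast; ring
    have := HasSum.of_nat_of_neg_add_one (f := t) (t1 ▸ hup) (t2 ▸ hdn2)
    rw [this.tsum_eq]
    norm_num; ring


lemma frozen_bound : ∃ C : ℝ, 0 ≤ C ∧ ∀ s : ℂ, 0 ≤ s.re → s ≠ 0 → ‖s‖ ≤ 2 →
    ‖Wf (1 / 2) * Tt s + 1 / 4 + ((PiProd / 9 : ℝ) : ℂ) * Bm s‖ ≤ C * Lsum ‖s‖ := by
  obtain ⟨cI, hcI, hcb⟩ := exists_cInf
  have hMc := Mc_pos
  refine ⟨‖4 * Wf (1 / 2)‖ * (‖cI‖ * 8 + 2 * Mc), by positivity, ?_⟩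
  intro s hs hs0 hs2
  have hE := E_rel cI hcb
  have hcE := cI_eq cI hcI
  obtain ⟨e, he, hBm⟩ := Bm_split hs hs0
  have hP := (Pup_summable hs hs0).hasSum
  set er : ℕ → ℂ := fun j => (cc (1 / 2) j - cI) * (3 / 2) ^ j * (s / (s + (bj j : ℂ))) with her
  have hLs : HasSum (fun j => 2 * Mc * Lt ‖s‖ j) (2 * Mc * Lsum ‖s‖) :=
    ((Lt_summable (norm_nonneg s)).hasSum).mul_left (2 * Mc)
  have herb : ∀ j, ‖er j‖ ≤ 2 * Mc * Lt ‖s‖ j := by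
    intro j
    have h1 := s_div_le hs (bj_pos j)
    have h2 := hcb j
    have hn : ‖(3 / 2 : ℂ)‖ = 3 / 2 := by norm_num
    simp only [her]
    rw [norm_mul, norm_mul, norm_pow, hn]
    have hm := max_bj_pos ‖s‖ j
    calc _ ≤ (2 * Mc * (1 / 2) ^ j) * (3 / 2) ^ j * (‖s‖ / max ‖s‖ (bj j)) := by gcongr
      _ = 2 * Mc * (1 * (3 / 4) ^ j * (‖s‖ / max ‖s‖ (bj j))) := by
        rw [show (3 / 4 : ℝ) = 1 / 2 * (3 / 2) by norm_num, mul_pow]; ring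
      _ ≤ _ := by
        unfold Lt
        gcongr
        have : (0 : ℝ) ≤ j := by positivity
        linarith
  have hers : Summable er := Summable.of_norm_bounded hLs.summable herb
  have herle : ‖∑' j, er j‖ ≤ 2 * Mc * Lsum ‖s‖ := tsum_of_norm_bounded hLs herb
  have hT := ((Tt_summable hs hs0).hasSum).div_const 4
  have hT2 := ((hP.mul_left cI).add (hE.sub hers.hasSum))
  have hfun : (fun j : ℕ => cc (1 / 2) j * (3 / 4) ^ j / (s + (bj j : ℂ)) / 4) =
      fun j : ℕ => cI * ((3 / 2 : ℂ) ^ j * ((bj j : ℂ) / (s + (bj j : ℂ)))) +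
        ((cc (1 / 2) j - cI) * (3 / 2) ^ j - er j) := by
    ext j
    have hne := sb_ne hs (bj_pos j)
    simp only [her]
    have e1 : (3 / 4 : ℂ) ^ j / 4 = (3 / 2) ^ j * (bj j : ℂ) := by
      unfold bj; push_cast
      rw [show (3 / 4 : ℂ) = 3 / 2 * (1 / 2) by norm_num, mul_pow, pow_add]; ring
    have e2 : s / (s + (bj j : ℂ)) = 1 - (bj j : ℂ) / (s + (bj j : ℂ)) := by field_simp; ring
    rw [e2]
    linear_combination cc (1 / 2) j / (s + (bj j : ℂ)) * e1
  have hTT : Tt s / 4 = cI * Pup s + ((2 * cI - hhalf) - ∑' j, er j) :=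
    hT.unique (by rw [hfun]; exact hT2)
  have hW := Wf_half
  have hh0 := hhalf_ne
  have hkey : Wf (1 / 2) * Tt s + 1 / 4 + ((PiProd / 9 : ℝ) : ℂ) * Bm s =
      4 * Wf (1 / 2) * (cI * e - ∑' j, er j) := by
    have e1 : Tt s = 4 * (cI * Pup s + ((2 * cI - hhalf) - ∑' j, er j)) := by
      rw [← hTT]; ring
    rw [e1, hBm, hW, hcE]; push_cast
    field_simp
    ring
  rw [hkey, norm_mul, mul_assoc]
  gcongr
  have h3 := le_Lsum (norm_nonneg s) hs2
  calc _ ≤ ‖cI * e‖ + ‖∑' j, er j‖ := norm_sub_le _ _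
    _ ≤ ‖cI‖ * (8 * Lsum ‖s‖) + 2 * Mc * Lsum ‖s‖ := by
      rw [norm_mul]
      gcongr
      linarith
    _ = _ := by ring

lemma key_bound : ∃ C : ℝ, 0 ≤ C ∧ ∀ q : ℂ, ‖q‖ < 1 / 2 →
    ‖FF q * (1 - 2 * q) ^ 2 + ((PiProd / 9 : ℝ) : ℂ) * Bm (1 - 2 * q)‖ ≤ C * Lsum ‖1 - 2 * q‖ := by
  obtain ⟨C0, hC0, hfr⟩ := frozen_bound
  obtain ⟨M1, hM1, hW⟩ := bdd_of_diff Wf diff_Wf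
  obtain ⟨M2, hM2, hN⟩ := bdd_of_diff CN diff_CN
  have hMc := Mc_pos
  refine ⟨C0 + M1 * (900 * Mc) + 100 * M1 * Mc + 200 * M2, by positivity, ?_⟩
  intro q hq
  have hs := re_s_nonneg hq.le
  have hs0 := s_ne hq
  have hs2 : ‖1 - 2 * q‖ ≤ 2 := norm_s_le hq.le
  have h1 := hfr _ hs hs0 hs2
  have h2 := T1_sub hq
  have h3 := Tt_bound hs
  have h4 := lip_half Wf M1 diff_Wf hW q hq.le
  have h5 := lip_half CN M2 diff_CN hN q hq.le
  have h6 := hW q (by norm_num; linarith)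
  have h7 := le_Lsum (norm_nonneg (1 - 2 * q)) hs2
  have hCN : CN (1 / 2) = 1 / 4 := by unfold CN; norm_num
  have hCF : CF q * (1 - 2 * q) ^ 2 = CN q := by
    unfold CF CN
    have : 1 - q ≠ 0 := one_sub_ne (by linarith)
    field_simp
  have hL := Lsum_nonneg (norm_nonneg (1 - 2 * q))
  have hFF : FF q * (1 - 2 * q) ^ 2 = Wf q * T1 q + CN q := by
    rw [← hCF]; unfold FF; field_simp
  set s := 1 - 2 * q
  have hid : FF q * s ^ 2 + ((PiProd / 9 : ℝ) : ℂ) * Bm s =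
      (Wf (1 / 2) * Tt s + 1 / 4 + ((PiProd / 9 : ℝ) : ℂ) * Bm s) + Wf q * (T1 q - Tt s)
      + (Wf q - Wf (1 / 2)) * Tt s + (CN q - CN (1 / 2)) := by
    rw [hFF, hCN]; ring
  rw [hid]
  have k1 : ‖Wf q * (T1 q - Tt s)‖ ≤ M1 * (900 * Mc * Lsum ‖s‖) := by
    rw [norm_mul]; gcongr
  have k2 : ‖(Wf q - Wf (1 / 2)) * Tt s‖ ≤ 100 * M1 * (Mc * Lsum ‖s‖) := by
    rw [norm_mul]
    calc _ ≤ (100 * M1 * ‖s‖) * ‖Tt s‖ := by gcongr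
      _ = 100 * M1 * ‖s * Tt s‖ := by rw [norm_mul]; ring
      _ ≤ _ := by gcongr
  have k3 : ‖CN q - CN (1 / 2)‖ ≤ 100 * M2 * (2 * Lsum ‖s‖) := h5.trans (by gcongr)
  have a1 := norm_add_le ((Wf (1 / 2) * Tt s + 1 / 4 + ((PiProd / 9 : ℝ) : ℂ) * Bm s) + Wf q * (T1 q - Tt s)
      + (Wf q - Wf (1 / 2)) * Tt s) (CN q - CN (1 / 2))
  have a2 := norm_add₃_le (a := (Wf (1 / 2) * Tt s + 1 / 4 + ((PiProd / 9 : ℝ) : ℂ) * Bm s)) (b := Wf q * (T1 q - Tt s))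
    (c := (Wf q - Wf (1 / 2)) * Tt s)
  linarith


lemma int_geom_bound (i : ℤ) : (3 / 4 : ℝ) ^ i * min 1 (8 * 2 ^ i) ≤ 8 * (3 / 4) ^ i.natAbs := by
  rcases Int.natAbs_eq i with h | h
  · set k := i.natAbs
    rw [h, zpow_natCast]
    have : min 1 (8 * (2 : ℝ) ^ (k : ℤ)) ≤ 8 := (min_le_left _ _).trans (by norm_num)
    calc _ ≤ (3 / 4 : ℝ) ^ k * 8 := by gcongr
      _ = _ := by ring
  · set k := i.natAbs
    rw [h]
    have h1 : min 1 (8 * (2 : ℝ) ^ (-(k : ℤ))) ≤ 8 * (2 : ℝ) ^ (-(k : ℤ)) := min_le_right _ _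
    calc _ ≤ (3 / 4 : ℝ) ^ (-(k : ℤ)) * (8 * (2 : ℝ) ^ (-(k : ℤ))) := by gcongr
      _ = 8 * (2 / 3) ^ k := by
        rw [show (3 / 4 : ℝ) ^ (-(k : ℤ)) * (8 * (2 : ℝ) ^ (-(k : ℤ))) = 8 * ((3 / 4 : ℝ) ^ (-(k : ℤ)) * (2 : ℝ) ^ (-(k : ℤ))) by ring, ← mul_zpow, zpow_neg, zpow_natCast, ← inv_pow]
        norm_num
      _ ≤ _ := by
        have : (2 / 3 : ℝ) ^ k ≤ (3 / 4) ^ k := pow_le_pow_left₀ (by norm_num) (by norm_num) k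
        linarith

lemma Lt_shift {x : ℝ} (hx : 0 < x) (J : ℕ) (hJ : x ≤ 2 * (1 / 2) ^ J) (j : ℕ) :
    Lt x j ≤ 8 * ((J + 1) * (3 / 4) ^ J) * ((1 + |(((j : ℤ) - J : ℤ) : ℝ)|) ^ 1 * (3 / 4) ^ ((j : ℤ) - J).natAbs) := by
  have hb := int_geom_bound ((j : ℤ) - J)
  have h1 : x / max x (bj j) ≤ min 1 (8 * 2 ^ ((j : ℤ) - J)) := by
    apply le_min
    · exact div_le_one_of_le₀ (le_max_left _ _) (max_bj_pos x j).le
    · rw [div_le_iff₀ (max_bj_pos x j)]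
      calc x ≤ 2 * (1 / 2) ^ J := hJ
        _ = 8 * 2 ^ ((j : ℤ) - J) * bj j := by
          unfold bj
          rw [zpow_sub₀ (by norm_num), zpow_natCast, zpow_natCast, pow_add, one_div, inv_pow, inv_pow]
          field_simp; norm_num
        _ ≤ _ := by gcongr; exact le_max_right _ _
  have h2 : (j : ℝ) + 1 ≤ (J + 1) * (1 + |(((j : ℤ) - J : ℤ) : ℝ)|) := by
    push_cast
    have h3 := le_abs_self ((j : ℝ) - J)
    have h4 : 0 ≤ (J : ℝ) * |(j : ℝ) - J| := by positivity
    nlinarith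
  have h3 : (3 / 4 : ℝ) ^ j = (3 / 4) ^ J * (3 / 4 : ℝ) ^ ((j : ℤ) - J) := by
    rw [zpow_sub₀ (by norm_num), zpow_natCast, zpow_natCast]; field_simp
  unfold Lt
  calc _ ≤ ((J + 1) * (1 + |(((j : ℤ) - J : ℤ) : ℝ)|)) * ((3 / 4) ^ J * (3 / 4 : ℝ) ^ ((j : ℤ) - J)) * min 1 (8 * 2 ^ ((j : ℤ) - J)) := by
        rw [h3]; gcongr
    _ = ((J + 1) * (1 + |(((j : ℤ) - J : ℤ) : ℝ)|)) * (3 / 4) ^ J * ((3 / 4 : ℝ) ^ ((j : ℤ) - J) * min 1 (8 * 2 ^ ((j : ℤ) - J))) := by ring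
    _ ≤ ((J + 1) * (1 + |(((j : ℤ) - J : ℤ) : ℝ)|)) * (3 / 4) ^ J * (8 * (3 / 4) ^ ((j : ℤ) - J).natAbs) := by gcongr
    _ = _ := by ring

lemma Lsum_bound : ∃ C : ℝ, 0 ≤ C ∧ ∀ n : ℕ, 2 ≤ n → ∀ x : ℝ, 1 / n ≤ x → x ≤ 2 →
    Lsum x ≤ C * Real.log n * x ^ (2 - gExp) := by
  set S : ℝ := ∑' i : ℤ, (1 + |(i : ℝ)|) ^ 1 * (3 / 4 : ℝ) ^ i.natAbs with hS
  have hSs := summable_int_geom (3 / 4) (by norm_num) (by norm_num) 1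
  have hS0 : 0 ≤ S := tsum_nonneg fun i => by positivity
  have hl2 := log2_pos
  refine ⟨8 * (3 / Real.log 2) * S, by positivity, ?_⟩
  intro n hn x hx hx2
  have hn0 : (0 : ℝ) < n := by positivity
  have hn2 : (2 : ℝ) ≤ n := by exact_mod_cast hn
  have hx0 : 0 < x := lt_of_lt_of_le (by positivity) hx
  obtain ⟨J, hJ1, hJ2⟩ := exists_nat_pow_near_of_lt_one (x := x / 2) (y := (1 / 2 : ℝ)) (by positivity) (by linarith) (by norm_num) (by norm_num)
  have hsh := Lt_shift hx0 J (by linarith)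
  have h1 : Lsum x ≤ 8 * ((J + 1) * (3 / 4) ^ J) * S := by
    unfold Lsum
    rw [hS, ← tsum_mul_left]
    refine Summable.tsum_le_tsum_of_inj (fun j : ℕ => (j : ℤ) - J) (fun a b h => by simpa using h) (fun c _ => by positivity) hsh (Lt_summable hx0.le) (hSs.mul_left _)
  have h2 : (3 / 4 : ℝ) ^ J ≤ x ^ (2 - gExp) := by
    have e : (3 / 4 : ℝ) ^ J = ((1 / 2 : ℝ) ^ J) ^ (2 - gExp) := by
      have := three_half_zpow J
      rw [zpow_natCast, zpow_natCast] at this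
      rw [show (3 / 4 : ℝ) = 3 / 2 * (1 / 2) by norm_num, mul_pow, this, one_div, inv_pow,
        Real.inv_rpow (by positivity), ← Real.rpow_neg (by positivity),
        show -(2 - gExp) = (gExp - 1) - 1 by ring, Real.rpow_sub_one (by positivity) (gExp - 1)]
      rfl
    rw [e]
    have := g_lt
    apply Real.rpow_le_rpow (by positivity) _ (by linarith)
    rw [pow_succ] at hJ1; linarith
  have h3 : (J : ℝ) + 1 ≤ 3 / Real.log 2 * Real.log n := by
    have h4 : (2 : ℝ) ^ J ≤ 2 * n := by
      have : 1 / n / 2 ≤ (1 / 2 : ℝ) ^ J := le_trans (by gcongr) hJ2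
      rw [one_div_pow, div_div, one_div_le_one_div (by positivity) (by positivity)] at this
      linarith
    have h5 := Real.log_le_log (by positivity) h4
    rw [Real.log_pow, Real.log_mul (by norm_num) (by positivity)] at h5
    have h6 := Real.log_le_log (by norm_num) hn2
    rw [div_mul_eq_mul_div, le_div_iff₀ hl2]
    linarith
  calc _ ≤ _ := h1
    _ ≤ 8 * ((3 / Real.log 2 * Real.log n) * x ^ (2 - gExp)) * S := by
      gcongr
    _ = _ := by ring


def mco2 (n : ℕ) : ℂ := ((2 ^ n * ∑' l, mTerm n l : ℝ) : ℂ)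
def Mq (q : ℂ) : ℂ := Bm (1 - 2 * q) / (1 - 2 * q) ^ 2

lemma Mq_hasSum {q : ℂ} (hq : ‖q‖ < 1 / 2) : HasSum (fun n => mco2 n * q ^ n) (Mq q) := model_hasSum q hq

lemma diff_Mq : DifferentiableOn ℂ Mq (Metric.ball 0 (1 / 2)) := by
  intro q hq
  have hq' : ‖q‖ < 1 / 2 := by simpa using hq
  obtain ⟨ρ, h1, h2⟩ := exists_between hq'
  have hρ : 0 ≤ ρ := (norm_nonneg q).trans h1.le
  have hs : Summable (fun n => ‖mco2 n * (ρ : ℂ) ^ n‖) :=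
    (Mq_hasSum (q := (ρ : ℂ)) (by rw [Complex.norm_real, Real.norm_of_nonneg hρ]; exact h2)).summable.norm
  have hd : DifferentiableOn ℂ (fun w : ℂ => ∑' n, mco2 n * w ^ n) (Metric.ball 0 ρ) := by
    refine Complex.differentiableOn_tsum_of_summable_norm hs (fun n => by fun_prop) Metric.isOpen_ball ?_
    intro n w hw
    have hw' : ‖w‖ < ρ := by simpa using hw
    rw [norm_mul, norm_mul, norm_pow, norm_pow, Complex.norm_real, Real.norm_of_nonneg hρ]
    gcongr
  have hd2 : DifferentiableOn ℂ Mq (Metric.ball 0 ρ) := hd.congr (fun w hw => by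
    have hw' : ‖w‖ < ρ := by simpa using hw
    exact (Mq_hasSum (hw'.trans h2)).tsum_eq.symm)
  exact (hd2.differentiableAt (Metric.isOpen_ball.mem_nhds (by simpa using h1))).differentiableWithinAt

def Dq (q : ℂ) : ℂ := FF q + ((PiProd / 9 : ℝ) : ℂ) * Mq q

lemma diff_Dq : DifferentiableOn ℂ Dq (Metric.ball 0 (1 / 2)) :=
  diff_FF.add (diff_Mq.const_mul _)

lemma coef_le (c : ℕ → ℂ) {r : ℝ} (hr : 0 < r)
    (hc : ∀ q : ℂ, ‖q‖ < r → HasSum (fun n => c n * q ^ n) (PAseries q)) {R : ℝ} (hR : 0 < R) (hR2 : R < 1 / 2) (n : ℕ) :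
    ‖c n + ((PiProd / 9 : ℝ) : ℂ) * mco2 n‖ ≤
      ((2 * Real.pi)⁻¹ * ∫ θ in (0 : ℝ)..2 * Real.pi, ‖Dq (circleMap 0 R θ)‖) * R⁻¹ ^ n := by
  set d : ℕ → ℂ := fun n => c n + ((PiProd / 9 : ℝ) : ℂ) * mco2 n with hd
  set p := FormalMultilinearSeries.ofScalars ℂ d with hp
  have h1 : HasFPowerSeriesAt Dq p 0 := by
    rw [hasFPowerSeriesAt_iff]
    have : Metric.ball (0 : ℂ) (min r (1 / 4)) ∈ 𝓝 (0 : ℂ) := Metric.ball_mem_nhds _ (by positivity)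
    filter_upwards [this] with z hz
    have hz' : ‖z‖ < min r (1 / 4) := by simpa using hz
    have hz1 := lt_of_lt_of_le hz' (min_le_left _ _)
    have hz2 := lt_of_lt_of_le hz' (min_le_right _ _)
    have k1 := hc z hz1
    have k2 := (Mq_hasSum (q := z) (by linarith)).mul_left ((PiProd / 9 : ℝ) : ℂ)
    have k3 := k1.add k2
    rw [zero_add]
    unfold Dq
    rw [← PAseries_eq hz2]
    have hfun : (fun n => z ^ n • p.coeff n) = fun b => c b * z ^ b + ((PiProd / 9 : ℝ) : ℂ) * (mco2 b * z ^ b) := by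
      ext n
      rw [hp, FormalMultilinearSeries.coeff_ofScalars, hd, smul_eq_mul]; ring
    rw [hfun]
    exact k3
  have h2 : HasFPowerSeriesOnBall Dq (cauchyPowerSeries Dq 0 R) 0 _ :=
    DifferentiableOn.hasFPowerSeriesOnBall (R := ⟨R, hR.le⟩)
      (diff_Dq.mono (Metric.closedBall_subset_ball hR2)) hR
  have h3 := h1.eq_formalMultilinearSeries h2.hasFPowerSeriesAt
  have h4 := norm_cauchyPowerSeries_le Dq 0 R n
  rw [← h3, FormalMultilinearSeries.norm_apply_eq_norm_coef, hp, FormalMultilinearSeries.coeff_ofScalars, abs_of_pos hR] at h4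
  exact h4

lemma circle_lower {n : ℕ} (hn : 2 ≤ n) {θ : ℝ} (hθ : |θ| ≤ Real.pi) :
    (1 / n + |θ|) / 4 ≤ ‖1 - 2 * circleMap 0 (1 / 2 * (1 - 1 / (n : ℝ))) θ‖ := by
  have hn2 : (2 : ℝ) ≤ n := by exact_mod_cast hn
  have hcos := Real.cos_le_one_sub_mul_cos_sq hθ
  set a : ℝ := 1 / n with ha
  have ha0 : 0 < a := by positivity
  have ha1 : a ≤ 1 / 2 := by rw [ha]; gcongr
  have hpi : Real.pi ^ 2 ≤ 10 := by nlinarith [Real.pi_lt_d2, Real.pi_pos]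
  have e : ‖1 - 2 * circleMap 0 (1 / 2 * (1 - a)) θ‖ ^ 2 = a ^ 2 + 2 * (1 - a) * (1 - Real.cos θ) := by
    rw [← Complex.normSq_eq_norm_sq, Complex.normSq_apply]
    have : circleMap 0 (1 / 2 * (1 - a)) θ = ⟨1 / 2 * (1 - a) * Real.cos θ, 1 / 2 * (1 - a) * Real.sin θ⟩ := by
      apply Complex.ext
      · simp [circleMap, Complex.exp_ofReal_mul_I_re, Complex.exp_ofReal_mul_I_im]
      · simp [circleMap, Complex.exp_ofReal_mul_I_re, Complex.exp_ofReal_mul_I_im]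
    rw [this]
    simp only [Complex.sub_re, Complex.sub_im, Complex.mul_re, Complex.mul_im, Complex.one_re, Complex.one_im, Complex.re_ofNat, Complex.im_ofNat]
    nlinarith [Real.sin_sq_add_cos_sq θ]
  have h1 : 2 / 10 * θ ^ 2 ≤ 1 - Real.cos θ := by
    have : 2 / 10 * θ ^ 2 ≤ 2 / Real.pi ^ 2 * θ ^ 2 := by gcongr
    linarith
  refine (sq_le_sq₀ (by positivity) (norm_nonneg _)).mp ?_
  rw [e]
  have h2 : θ ^ 2 / 5 ≤ 2 * (1 - a) * (1 - Real.cos θ) := by nlinarith [sq_nonneg θ]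
  have h3 : |θ| ^ 2 = θ ^ 2 := sq_abs θ
  nlinarith [sq_nonneg (a - |θ|), abs_nonneg θ]

lemma int_rpow_le {a b : ℝ} (ha : 0 < a) (hb : 0 ≤ b) :
    ∫ θ in (0 : ℝ)..b, (a + θ) ^ (-gExp) ≤ a ^ (1 - gExp) / (gExp - 1) := by
  have hg := g_gt
  rw [intervalIntegral.integral_comp_add_left (fun x => x ^ (-gExp)) a, integral_rpow]
  · rw [show -gExp + 1 = 1 - gExp by ring, add_zero, ← neg_div_neg_eq]
    have : 0 ≤ (a + b) ^ (1 - gExp) := by positivity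
    rw [neg_sub, neg_sub]
    have : 0 < gExp - 1 := by linarith
    gcongr; linarith
  · right
    refine ⟨by linarith, ?_⟩
    rw [add_zero, Set.uIcc_of_le (by linarith)]
    intro h; linarith [h.1]


lemma Dq_bound : ∃ C : ℝ, 0 ≤ C ∧ ∀ n : ℕ, 2 ≤ n → ∀ q : ℂ, ‖q‖ = 1 / 2 * (1 - 1 / (n : ℝ)) →
    ‖Dq q‖ ≤ C * Real.log n * ‖1 - 2 * q‖ ^ (-gExp) := by
  obtain ⟨K, hK, hk⟩ := key_bound
  obtain ⟨C, hC, hL⟩ := Lsum_bound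
  refine ⟨K * C, by positivity, ?_⟩
  intro n hn q hq
  have hn2 : (2 : ℝ) ≤ n := by exact_mod_cast hn
  have ha0 : 0 < 1 / (n : ℝ) := by positivity
  have hq2 : ‖q‖ < 1 / 2 := by linarith
  have hs0 := s_ne hq2
  have h1 : 1 / (n : ℝ) ≤ ‖1 - 2 * q‖ := by
    have := norm_one_sub_ge (2 * q)
    rw [norm_mul, hq] at this
    norm_num at this ⊢
    linarith
  have h2 := hL n hn _ h1 (norm_s_le hq2.le)
  have h3 := hk q hq2
  have hx : 0 < ‖1 - 2 * q‖ := norm_pos_iff.mpr hs0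
  have e : FF q * (1 - 2 * q) ^ 2 + ((PiProd / 9 : ℝ) : ℂ) * Bm (1 - 2 * q) = Dq q * (1 - 2 * q) ^ 2 := by
    unfold Dq Mq
    field_simp
  rw [e, norm_mul, norm_pow] at h3
  set x := ‖1 - 2 * q‖
  have e2 : x ^ (-gExp) = x ^ (2 - gExp) / x ^ 2 := by
    rw [show -gExp = (2 - gExp) - (2 : ℕ) by push_cast; ring, Real.rpow_sub_natCast hx.ne']
  rw [e2, ← mul_div_assoc, le_div_iff₀ (by positivity)]
  calc _ ≤ _ := h3
    _ ≤ K * (C * Real.log n * x ^ (2 - gExp)) := by gcongr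
    _ = _ := by ring

lemma circle_bound {n : ℕ} (hn : 2 ≤ n) {θ : ℝ} (h0 : 0 ≤ θ) (h1 : θ ≤ 2 * Real.pi) :
    ‖1 - 2 * circleMap 0 (1 / 2 * (1 - 1 / (n : ℝ))) θ‖ ^ (-gExp) ≤
      16 * ((1 / n + θ) ^ (-gExp) + (1 / n + (2 * Real.pi - θ)) ^ (-gExp)) := by
  have hg := g_gt
  have hg2 := g_lt
  have hn2 : (2 : ℝ) ≤ n := by exact_mod_cast hn
  have hpi := Real.pi_pos
  have ha0 : 0 < 1 / (n : ℝ) := by positivity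
  have hA : 0 ≤ (1 / n + θ) ^ (-gExp) := by positivity
  have hB : 0 ≤ (1 / n + (2 * Real.pi - θ)) ^ (-gExp) := Real.rpow_nonneg (by linarith) _
  have gen : ∀ x y : ℝ, 0 < y → y / 4 ≤ x → x ^ (-gExp) ≤ 16 * y ^ (-gExp) := by
    intro x y hy hxy
    calc x ^ (-gExp) ≤ (y / 4) ^ (-gExp) := Real.rpow_le_rpow_of_nonpos (by positivity) hxy (by linarith)
      _ = 4 ^ gExp * y ^ (-gExp) := by
        rw [Real.div_rpow hy.le (by norm_num), Real.rpow_neg (by norm_num : (0 : ℝ) ≤ 4)]; field_simp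
      _ ≤ 4 ^ (2 : ℝ) * y ^ (-gExp) := by gcongr; norm_num
      _ = _ := by norm_num
  rcases le_total θ Real.pi with h | h
  · have k := circle_lower hn (θ := θ) (by rw [abs_of_nonneg h0]; exact h)
    rw [abs_of_nonneg h0] at k
    have := gen _ _ (by linarith) k
    linarith
  · have habs : |θ - 2 * Real.pi| = 2 * Real.pi - θ := by rw [abs_of_nonpos (by linarith)]; ring
    have k := circle_lower hn (θ := θ - 2 * Real.pi) (by rw [habs]; linarith)
    rw [habs, (periodic_circleMap 0 _).sub_eq] at k
    have := gen _ _ (by linarith) k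
    linarith

lemma coef_bound (c : ℕ → ℂ) {r : ℝ} (hr : 0 < r)
    (hc : ∀ q : ℂ, ‖q‖ < r → HasSum (fun n => c n * q ^ n) (PAseries q)) :
    ∃ C : ℝ, 0 ≤ C ∧ ∀ n : ℕ, 2 ≤ n → ‖c n + ((PiProd / 9 : ℝ) : ℂ) * mco2 n‖ ≤
      C * 2 ^ n * (n : ℝ) ^ (gExp - 1) * Real.log n := by
  obtain ⟨C, hC, hD⟩ := Dq_bound
  have hg := g_gt
  have hg1 : 0 < gExp - 1 := by linarith
  have hpi := Real.pi_pos
  refine ⟨(2 * Real.pi)⁻¹ * (C * (16 * (2 / (gExp - 1)))) * Real.exp 2, by positivity, ?_⟩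
  intro n hn
  have hn2 : (2 : ℝ) ≤ n := by exact_mod_cast hn
  have hlog : 0 ≤ Real.log n := Real.log_nonneg (by linarith)
  have ha0 : 0 < 1 / (n : ℝ) := by positivity
  have ha1 : 1 / (n : ℝ) ≤ 1 / 2 := by gcongr
  set R : ℝ := 1 / 2 * (1 - 1 / (n : ℝ)) with hRd
  have hR : 0 < R := by rw [hRd]; linarith
  have hR2 : R < 1 / 2 := by rw [hRd]; linarith
  have h1 := coef_le c hr hc hR hR2 n
  have hq : ∀ θ, ‖circleMap 0 R θ‖ = R := fun θ => by rw [norm_circleMap_zero, abs_of_pos hR]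
  have hcont : Continuous (fun θ => ‖Dq (circleMap 0 R θ)‖) := by
    have : Continuous (fun θ => Dq (circleMap 0 R θ)) := by
      refine diff_Dq.continuousOn.comp_continuous (continuous_circleMap 0 R) (fun θ => ?_)
      rw [mem_ball_zero_iff, hq]; exact hR2
    exact this.norm
  have hcA : ContinuousOn (fun θ : ℝ => (1 / (n : ℝ) + θ) ^ (-gExp)) (Set.uIcc 0 (2 * Real.pi)) := by
    rw [Set.uIcc_of_le (by positivity)]
    refine ContinuousOn.rpow_const (by fun_prop) (fun θ hθ => Or.inl ?_)
    have := hθ.1; linarith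
  have hcB : ContinuousOn (fun θ : ℝ => (1 / (n : ℝ) + (2 * Real.pi - θ)) ^ (-gExp)) (Set.uIcc 0 (2 * Real.pi)) := by
    rw [Set.uIcc_of_le (by positivity)]
    refine ContinuousOn.rpow_const (by fun_prop) (fun θ hθ => Or.inl ?_)
    have := hθ.2; linarith
  have h2 : ∫ θ in (0 : ℝ)..2 * Real.pi, ‖Dq (circleMap 0 R θ)‖ ≤
      ∫ θ in (0 : ℝ)..2 * Real.pi, C * Real.log n * (16 * ((1 / (n : ℝ) + θ) ^ (-gExp) + (1 / (n : ℝ) + (2 * Real.pi - θ)) ^ (-gExp))) := by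
    refine intervalIntegral.integral_mono_on (by positivity) (hcont.intervalIntegrable _ _) ?_ ?_
    · exact (((hcA.intervalIntegrable).add hcB.intervalIntegrable).const_mul 16).const_mul _
    · intro θ hθ
      refine (hD n hn _ (hq θ)).trans ?_
      gcongr
      exact circle_bound hn hθ.1 hθ.2
  have h3 := int_rpow_le ha0 (b := 2 * Real.pi) (by positivity)
  rw [intervalIntegral.integral_const_mul, intervalIntegral.integral_const_mul,
    intervalIntegral.integral_add hcA.intervalIntegrable hcB.intervalIntegrable,
    intervalIntegral.integral_comp_sub_left (fun x => (1 / (n : ℝ) + x) ^ (-gExp)) (2 * Real.pi), sub_self, sub_zero] at h2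
  have e1 : (1 / (n : ℝ)) ^ (1 - gExp) = (n : ℝ) ^ (gExp - 1) := by
    rw [one_div, Real.inv_rpow (by positivity), ← Real.rpow_neg (by positivity), neg_sub]
  rw [e1] at h3
  have h4 : R⁻¹ ^ n ≤ 2 ^ n * Real.exp 2 := by
    have k1 : R⁻¹ ≤ 2 * Real.exp (2 / n) := by
      have k2 := Real.add_one_le_exp (2 / (n : ℝ))
      rw [inv_le_iff_one_le_mul₀ hR]
      have k3 : (2 : ℝ) / n = 2 * (1 / n) := by ring
      rw [k3] at k2 ⊢
      calc (1 : ℝ) ≤ 2 * (2 * (1 / (n : ℝ)) + 1) * R := by rw [hRd]; nlinarith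
        _ ≤ _ := by gcongr
    calc _ ≤ (2 * Real.exp (2 / n)) ^ n := by gcongr
      _ = _ := by
        rw [mul_pow, ← Real.exp_nat_mul]; congr 2; field_simp
  calc _ ≤ _ := h1
    _ ≤ ((2 * Real.pi)⁻¹ * (C * Real.log n * (16 * ((n : ℝ) ^ (gExp - 1) / (gExp - 1) + (n : ℝ) ^ (gExp - 1) / (gExp - 1))))) * (2 ^ n * Real.exp 2) := by
      gcongr
      refine h2.trans ?_
      gcongr
    _ = _ := by ring

lemma final_bound (c : ℕ → ℂ)
    (hc : ∃ r : ℝ, 0 < r ∧ ∀ q : ℂ, ‖q‖ < r → HasSum (fun n => c n * q ^ n) (PAseries q)) :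
      ∃ Cb : ℝ, 0 < Cb ∧
        ∀ n : ℕ, 2 ≤ n →
          ‖c n - ((kappa0 : ℂ) + kappaFun (Real.logb 2 n)) *
              (((2 : ℝ) ^ n * (n : ℝ) ^ gExp : ℝ) : ℂ)‖ ≤
            Cb * 2 ^ n * (n : ℝ) ^ (gExp - 1) * Real.log n := by
  obtain ⟨r, hr, hc⟩ := hc
  obtain ⟨C1, hC1, h1⟩ := coef_bound c hr hc
  obtain ⟨C2, hC2, h2⟩ := model_approx
  have hl2 := log2_pos
  refine ⟨C1 + |PiProd / 9| * C2 / Real.log 2 + 1, by positivity, ?_⟩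
  intro n hn
  have hn2 : (2 : ℝ) ≤ n := by exact_mod_cast hn
  have k1 := h1 n hn
  have k2 := h2 n (by omega)
  have k3 := main_term n (by omega)
  have hlog : Real.log 2 ≤ Real.log n := Real.log_le_log (by norm_num) hn2
  set X := ∑' l, mTerm n l with hX
  set Y := ∑' l : ℤ, (3 : ℝ) ^ l * psi ((2 : ℝ) ^ (-l) * n) with hY
  have e : c n - ((kappa0 : ℂ) + kappaFun (Real.logb 2 n)) * (((2 : ℝ) ^ n * (n : ℝ) ^ gExp : ℝ) : ℂ) =
      (c n + ((PiProd / 9 : ℝ) : ℂ) * mco2 n) - ((PiProd / 9 * 2 ^ n * (X - Y) : ℝ) : ℂ) := by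
    rw [Complex.ofReal_mul]
    rw [show ((kappa0 : ℂ) + kappaFun (Real.logb 2 n)) * ((((2 : ℝ) ^ n : ℝ) : ℂ) * (((n : ℝ) ^ gExp : ℝ) : ℂ))
      = (((2 : ℝ) ^ n : ℝ) : ℂ) * (((kappa0 : ℂ) + kappaFun (Real.logb 2 n)) * (((n : ℝ) ^ gExp : ℝ) : ℂ)) by ring, k3]
    unfold mco2
    rw [← hX]
    simp only [Complex.ofReal_mul, Complex.ofReal_sub, Complex.ofReal_neg]
    ring
  rw [e]
  have k4 : ‖((PiProd / 9 * 2 ^ n * (X - Y) : ℝ) : ℂ)‖ ≤ |PiProd / 9| * C2 / Real.log 2 * 2 ^ n * (n : ℝ) ^ (gExp - 1) * Real.log n := by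
    rw [Complex.norm_real, Real.norm_eq_abs, abs_mul, abs_mul, abs_of_pos (by positivity : (0 : ℝ) < 2 ^ n)]
    calc _ ≤ |PiProd / 9| * 2 ^ n * (C2 * (n : ℝ) ^ (gExp - 1)) := by gcongr
      _ = |PiProd / 9| * C2 / Real.log 2 * 2 ^ n * (n : ℝ) ^ (gExp - 1) * Real.log 2 := by field_simp
      _ ≤ _ := by gcongr
  have k5 : 0 ≤ 2 ^ n * (n : ℝ) ^ (gExp - 1) * Real.log n := by
    have : 0 ≤ Real.log n := by linarith
    positivity
  calc _ ≤ _ := norm_sub_le _ _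
    _ ≤ _ := add_le_add k1 k4
    _ ≤ _ := by nlinarith
/-- The number `PA_n` of 3-sided prudent polygons of area `n` satisfies
`PA_n = [κ₀ + κ(log₂ n)] 2ⁿ n^g + O(2ⁿ n^{g-1} log n)` with `g = log₂ 3`, where `κ` is
a smooth periodic function of period 1 and mean value zero given by an absolutely
convergent Fourier series. -/
theorem PA_coefficient_asymptotics :
    Summable (fun k : ℤ => ‖kappaCoef k‖) ∧
    ContDiff ℝ (⊤ : ℕ∞) kappaFun ∧
    (∀ u : ℝ, kappaFun (u + 1) = kappaFun u) ∧
    (∫ u in (0 : ℝ)..1, kappaFun u) = 0 ∧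
    ∀ c : ℕ → ℂ,
      (∃ r : ℝ, 0 < r ∧ ∀ q : ℂ, ‖q‖ < r → HasSum (fun n => c n * q ^ n) (PAseries q)) →
      ∃ Cb : ℝ, 0 < Cb ∧
        ∀ n : ℕ, 2 ≤ n →
          ‖c n - ((kappa0 : ℂ) + kappaFun (Real.logb 2 n)) *
              (((2 : ℝ) ^ n * (n : ℝ) ^ gExp : ℝ) : ℂ)‖ ≤
            Cb * 2 ^ n * (n : ℝ) ^ (gExp - 1) * Real.log n := by
  exact ⟨kappaCoef_summable, kappaFun_contDiff, kappaFun_periodic, kappaFun_integral, final_bound⟩
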